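/- Let n ≥ 1 be an integer such that O_{n²+4} is a maximal order (i.e., n² + 4 is a fundamental discriminant, meaning O_{n²+4} equals the full ring of integers of the real quadratic field ℚ(√(n²+4))). Then the class number h_{n²+4} equals 1 if and only if n ∈ {1, 2, 3, 5, 7, 13, 17}, i.e., if and only if n² + 4 ∈ {5, 8, 13, 29, 53, 173, 293}. -/

import Mathlib

noncomputable section

/-- A complex square root of an integer `d`. -/
def sqrtD (d : ℤ) : ℂ :=
  if 0 ≤ d then ((Real.sqrt d : ℝ) : ℂ) else Complex.I * ((Real.sqrt (-d) : ℝ) : ℂ)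

/-- The element `(Δ + √Δ)/2` generating the quadratic order of discriminant `Δ`. -/
def omegaD (d : ℤ) : ℂ := ((d : ℂ) + sqrtD d) / 2

/-- The quadratic order `O_Δ = ℤ[(Δ + √Δ)/2]` of discriminant `Δ`, as a subring of `ℂ`. -/
def QOrder (d : ℤ) : Subring ℂ := Subring.closure {omegaD d}

/-- The class number `h_Δ`: the order of the (wide) class group of `O_Δ`,
the group of invertible fractional ideals modulo principal fractional ideals. -/
def classNumber (d : ℤ) : ℕ := Nat.card (ClassGroup (QOrder d))

/-- `O_Δ` is a maximal order: every element of `ℚ(√Δ)` (the subfield of `ℂ` generated by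
`(Δ+√Δ)/2`) that is integral over `ℤ` already lies in `O_Δ`. -/
def IsMaximalOrder (d : ℤ) : Prop :=
  ∀ x ∈ Subfield.closure {omegaD d}, IsIntegral ℤ x → x ∈ QOrder d

/-!
Let `ε ^ 2 = n ε + 1`, so that `ℤ[ε]` is the order of discriminant `n ^ 2 + 4`; when it is maximal,
its class number is `1` exactly when it is a principal ideal domain.

Suppose that `ℤ[ε]` is principal. Then every prime `p < n` is inert in it: otherwise `p` would be
the norm of an element up to sign, but an element that is not associated to an integer has norm at
least `n`. For small `n` this leaves only the values of the theorem. Large `n` are excluded by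
Biró's proof of Yokoi's conjecture. Every nonzero ideal has a unique generator `X + Y ε` in the cone
`0 ≤ Y < n X`, so the points of norm `N` in the cone are counted by a divisor sum of the quadratic
character modulo `n ^ 2 + 4`. Weight the points by an odd function `f` modulo `q` of their norm, and
integrate the resulting exponential series along a hyperbola, where each term becomes a Bessel
function of the norm. Comparing the constant terms as the hyperbola approaches its asymptotes gives
an identity between finite sums. When `f` lifts a multiplicative function modulo `q` with values
modulo a prime `r`, this identity becomes a congruence modulo `r` that involves only the residues of
`n` modulo `q` and `r`. The pairs `(q, r) = (105, 13)` and `(91, 37)`, together with the inertness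
of `3, 5, 7, 13, 37`, exclude every residue class.

Conversely, if all primes up to `(n + 1) / 2` are inert, then Dirichlet approximation verifies the
Dedekind–Hasse criterion.
-/

section BesselIntegral

open MeasureTheory Filter

/-- The Bessel integral `∫ exp (-2 s cosh v) dv = 2 K₀(2 s)`, through which the terms of the two
lattice sums compared below depend on their norm only. -/
def besselIntegral (s : ℝ) : ℝ := ∫ v : ℝ, Real.exp (-(2 * s * Real.cosh v))

lemma one_add_sq_le_two_mul_cosh (v : ℝ) : 1 + v ^ 2 ≤ 2 * Real.cosh v := by
  have hcosh : 2 * Real.cosh v = 2 + 4 * Real.sinh (v / 2) ^ 2 := by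
    rw [← mul_div_cancel₀ v two_ne_zero, Real.cosh_two_mul, Real.cosh_sq]
    ring_nf
  have hsinh : (v / 2) ^ 2 ≤ Real.sinh (v / 2) ^ 2 := by
    rw [sq_le_sq, Real.abs_sinh]
    exact Real.self_le_sinh_iff.2 (abs_nonneg _)
  linarith

lemma exp_neg_two_mul_cosh_le {s : ℝ} (hs : 0 < s) (v : ℝ) :
    Real.exp (-(2 * s * Real.cosh v)) ≤ 24 / s ^ 4 * (1 + v ^ 2)⁻¹ := by
  have hcosh := one_add_sq_le_two_mul_cosh v
  have hone : 1 ≤ 1 + v ^ 2 := by nlinarith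
  have hexp := Real.pow_div_factorial_le_exp (x := s * (1 + v ^ 2)) (by positivity) 4
  calc Real.exp (-(2 * s * Real.cosh v)) ≤ Real.exp (-(s * (1 + v ^ 2))) :=
        Real.exp_le_exp.2 (by nlinarith)
    _ ≤ 24 / (s ^ 4 * (1 + v ^ 2) ^ 4) := by
        rw [Real.exp_neg, inv_le_comm₀ (Real.exp_pos _) (by positivity), inv_div, ← mul_pow]
        exact hexp
    _ ≤ 24 / (s ^ 4 * (1 + v ^ 2)) := by gcongr; exact le_self_pow₀ hone (by norm_num)
    _ = 24 / s ^ 4 * (1 + v ^ 2)⁻¹ := by field_simp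

lemma integrable_exp_neg_two_mul_cosh {s : ℝ} (hs : 0 < s) :
    Integrable fun v : ℝ => Real.exp (-(2 * s * Real.cosh v)) := by
  refine (integrable_inv_one_add_sq.const_mul (24 / s ^ 4)).mono'
    (Continuous.aestronglyMeasurable (by fun_prop)) (Eventually.of_forall fun v => ?_)
  rw [Real.norm_of_nonneg (Real.exp_nonneg _)]
  exact exp_neg_two_mul_cosh_le hs v

lemma besselIntegral_nonneg (s : ℝ) : 0 ≤ besselIntegral s :=
  integral_nonneg fun _ => Real.exp_nonneg _

lemma besselIntegral_le {s : ℝ} (hs : 0 < s) : besselIntegral s ≤ 24 / s ^ 4 * Real.pi := by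
  rw [← integral_univ_inv_one_add_sq, ← integral_const_mul]
  exact integral_mono (integrable_exp_neg_two_mul_cosh hs)
    (integrable_inv_one_add_sq.const_mul _) (exp_neg_two_mul_cosh_le hs)

lemma exists_mul_exp_add_mul_exp_neg_eq {α β : ℝ} (hα : 0 < α) (hβ : 0 < β) :
    ∃ h : ℝ, ∀ u, α * Real.exp (u + h) + β * Real.exp (-(u + h)) =
      2 * √(α * β) * Real.cosh u := by
  refine ⟨Real.log (√β / √α), fun u => ?_⟩
  rw [neg_add, Real.exp_add, Real.exp_add, Real.exp_neg (Real.log _), Real.exp_log (by positivity),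
    Real.cosh_eq, Real.sqrt_mul hα.le]
  field_simp
  rw [Real.sq_sqrt hα.le, Real.sq_sqrt hβ.le]
  ring

variable {α β : ℝ}

lemma integrable_exp_neg_mul_exp_add (hα : 0 < α) (hβ : 0 < β) :
    Integrable fun v => Real.exp (-(α * Real.exp v + β * Real.exp (-v))) := by
  obtain ⟨h, hshift⟩ := exists_mul_exp_add_mul_exp_neg_eq hα hβ
  have hint := integrable_exp_neg_two_mul_cosh (Real.sqrt_pos.2 (mul_pos hα hβ))
  simp_rw [← hshift] at hint
  simpa using hint.comp_sub_right h

lemma integral_exp_neg_mul_exp_add (hα : 0 < α) (hβ : 0 < β) :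
    ∫ v, Real.exp (-(α * Real.exp v + β * Real.exp (-v))) = besselIntegral √(α * β) := by
  obtain ⟨h, hshift⟩ := exists_mul_exp_add_mul_exp_neg_eq hα hβ
  rw [← integral_add_right_eq_self _ h]
  simp_rw [hshift]
  rfl

lemma integrable_tsum_of_summable_integral_norm {ι X : Type*} [Countable ι] [MeasurableSpace X]
    {μ : Measure X} {F : ι → X → ℝ} (hF : ∀ i, Integrable (F i) μ)
    (hsum : Summable fun i => ∫ a, ‖F i a‖ ∂μ) : Integrable (fun a => ∑' i, F i a) μ := by
  refine ⟨(AEMeasurable.tsum fun i => (hF i).1.aemeasurable).aestronglyMeasurable, ?_⟩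
  calc ∫⁻ a, ‖∑' i, F i a‖ₑ ∂μ ≤ ∫⁻ a, ∑' i, ‖F i a‖ₑ ∂μ :=
        lintegral_mono fun a => enorm_tsum_le_tsum_enorm
    _ = ∑' i, ∫⁻ a, ‖F i a‖ₑ ∂μ := lintegral_tsum fun i => (hF i).1.enorm
    _ = ∑' i, ENNReal.ofReal (∫ a, ‖F i a‖ ∂μ) :=
        tsum_congr fun i => (ofReal_integral_norm_eq_lintegral_enorm (hF i)).symm
    _ = ENNReal.ofReal (∑' i, ∫ a, ‖F i a‖ ∂μ) :=
        (ENNReal.ofReal_tsum_of_nonneg (fun i => integral_nonneg fun a => norm_nonneg _) hsum).symm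
    _ < ⊤ := ENNReal.ofReal_lt_top

section ExpSeries

variable {ι : Type*} {c α β : ι → ℝ}

lemma integrable_mul_exp_neg_mul_exp_add (hpos : ∀ i, c i ≠ 0 → 0 < α i ∧ 0 < β i) (i : ι) :
    Integrable fun v => c i * Real.exp (-(α i * Real.exp v + β i * Real.exp (-v))) := by
  by_cases hc : c i = 0
  · simp [hc]
  · exact (integrable_exp_neg_mul_exp_add (hpos i hc).1 (hpos i hc).2).const_mul _

lemma integral_mul_exp_neg_mul_exp_add (hpos : ∀ i, c i ≠ 0 → 0 < α i ∧ 0 < β i) (i : ι) :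
    ∫ v, c i * Real.exp (-(α i * Real.exp v + β i * Real.exp (-v))) =
      c i * besselIntegral √(α i * β i) := by
  by_cases hc : c i = 0
  · simp [hc]
  · rw [integral_const_mul, integral_exp_neg_mul_exp_add (hpos i hc).1 (hpos i hc).2]

lemma summable_integral_norm_mul_exp_neg_mul_exp_add
    (hpos : ∀ i, c i ≠ 0 → 0 < α i ∧ 0 < β i)
    (hsum : Summable fun i => c i * besselIntegral √(α i * β i)) :
    Summable fun i =>
      ∫ v, ‖c i * Real.exp (-(α i * Real.exp v + β i * Real.exp (-v)))‖ := by
  refine hsum.abs.congr fun i => ?_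
  have hpos' : ∀ i, |c i| ≠ 0 → 0 < α i ∧ 0 < β i := fun i hc => hpos i (by simpa using hc)
  simp_rw [norm_mul, Real.norm_eq_abs, Real.abs_exp, abs_mul,
    abs_of_nonneg (besselIntegral_nonneg _), integral_mul_exp_neg_mul_exp_add hpos']

variable [Countable ι]

lemma integrable_tsum_mul_exp_neg_mul_exp_add (hpos : ∀ i, c i ≠ 0 → 0 < α i ∧ 0 < β i)
    (hsum : Summable fun i => c i * besselIntegral √(α i * β i)) :
    Integrable fun v => ∑' i, c i * Real.exp (-(α i * Real.exp v + β i * Real.exp (-v))) :=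
  integrable_tsum_of_summable_integral_norm (integrable_mul_exp_neg_mul_exp_add hpos)
    (summable_integral_norm_mul_exp_neg_mul_exp_add hpos hsum)

lemma integral_tsum_mul_exp_neg_mul_exp_add (hpos : ∀ i, c i ≠ 0 → 0 < α i ∧ 0 < β i)
    (hsum : Summable fun i => c i * besselIntegral √(α i * β i)) :
    ∫ v, ∑' i, c i * Real.exp (-(α i * Real.exp v + β i * Real.exp (-v))) =
      ∑' i, c i * besselIntegral √(α i * β i) := by
  rw [← (hasSum_integral_of_summable_integral_norm (integrable_mul_exp_neg_mul_exp_add hpos)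
    (summable_integral_norm_mul_exp_neg_mul_exp_add hpos hsum)).tsum_eq]
  exact tsum_congr (integral_mul_exp_neg_mul_exp_add hpos)

end ExpSeries

end BesselIntegral

section LatticeSums

open MeasureTheory Filter

/-- The norm form `x² + n x y - y²` of the order `ℤ[ε]`, `ε² = n ε + 1`, over any ring. -/
def normForm {R : Type*} [CommRing R] (n x y : R) : R := x ^ 2 + n * x * y - y ^ 2

/-- The fundamental unit `ε = (n + √(n² + 4)) / 2`, as a real number. -/
def fundUnit (n : ℕ) : ℝ := (n + √((n : ℝ) ^ 2 + 4)) / 2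

lemma fundUnit_pos (n : ℕ) : 0 < fundUnit n := by unfold fundUnit; positivity

lemma fundUnit_sq (n : ℕ) : fundUnit n ^ 2 = n * fundUnit n + 1 := by
  have := Real.sq_sqrt (show (0 : ℝ) ≤ (n : ℝ) ^ 2 + 4 by positivity)
  unfold fundUnit
  linear_combination this / 4

lemma inv_fundUnit (n : ℕ) : (fundUnit n)⁻¹ = fundUnit n - n := by
  have := fundUnit_pos n
  field_simp
  linear_combination -fundUnit_sq n

lemma lt_fundUnit (n : ℕ) : (n : ℝ) < fundUnit n := by
  have := inv_pos.2 (fundUnit_pos n)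
  rw [inv_fundUnit] at this
  linarith

/-- The lattice points `(X, Y)` of the half-open cone `0 ≤ Y < n X`, a fundamental domain for the
units of `ℤ[ε]` acting on its elements `X + Y ε` of positive norm. -/
def cone (n : ℕ) : Set (ℕ × ℕ) := {p | p.2 < n * p.1}

/-- The norm form on the cone; the subtraction in `ℕ` does not truncate there. -/
def coneNorm (n : ℕ) (p : cone n) : ℕ := p.1.1 ^ 2 + p.1.2 * (n * p.1.1 - p.1.2)

/-- `∑ f (m k) χ(k) exp (-(m x + k y))` over all pairs `(m, k)`. -/
def productSeries (f χ : ℕ → ℝ) (x y : ℝ) : ℝ :=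
  ∑' p : ℕ × ℕ, f (p.1 * p.2) * χ p.2 * Real.exp (-(p.1 * x + p.2 * y))

/-- `∑ f (N) exp (-(α x + β y))` over the points of the cone, where `α = ε⁻¹ (X + Y ε)` and
`β = ε (X - Y ε⁻¹)` are conjugate up to a unit and their product is the norm `N`. -/
def coneSeries (n : ℕ) (f : ℕ → ℝ) (x y : ℝ) : ℝ :=
  ∑' p : cone n, f (coneNorm n p) *
    Real.exp (-((p.1.1 * (fundUnit n)⁻¹ + p.1.2) * x + (p.1.1 * fundUnit n - p.1.2) * y))

/-- `χ` counts the points of the cone: there are `∑_{d ∣ N} χ(d)` of them of norm `N`. -/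
def CountsConePoints (n : ℕ) (χ : ℕ → ℝ) : Prop :=
  ∀ N : ℕ, N ≠ 0 → (Nat.card (coneNorm n ⁻¹' {N}) : ℝ) = ∑ d ∈ N.divisors, χ d

section

variable {n : ℕ}

lemma intCast_coneNorm (p : cone n) : (coneNorm n p : ℤ) = normForm (n : ℤ) p.1.1 p.1.2 := by
  obtain ⟨⟨X, Y⟩, hp⟩ := p
  have hle : Y ≤ n * X := le_of_lt hp
  simp only [coneNorm, normForm]
  push_cast [Nat.cast_sub hle]
  ring

lemma fst_pos_of_mem_cone {p : ℕ × ℕ} (hp : p ∈ cone n) : 0 < p.1 :=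
  Nat.pos_of_mul_pos_left (Nat.zero_lt_of_lt hp)

lemma sq_fst_le_coneNorm (p : cone n) : p.1.1 ^ 2 ≤ coneNorm n p := Nat.le_add_right _ _

lemma coneNorm_ne_zero (p : cone n) : coneNorm n p ≠ 0 :=
  ((pow_pos (fst_pos_of_mem_cone p.2) 2).trans_le (sq_fst_le_coneNorm p)).ne'

lemma mul_inv_fundUnit_add_pos (p : cone n) : 0 < p.1.1 * (fundUnit n)⁻¹ + p.1.2 := by
  have := fst_pos_of_mem_cone p.2
  have := fundUnit_pos n
  positivity

lemma mul_fundUnit_sub_pos (p : cone n) : 0 < p.1.1 * fundUnit n - p.1.2 := by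
  have hY : (p.1.2 : ℝ) < n * p.1.1 := mod_cast p.2
  have hX : (0 : ℝ) < p.1.1 := mod_cast fst_pos_of_mem_cone p.2
  linarith [mul_lt_mul_of_pos_left (lt_fundUnit n) hX]

lemma mul_conj_eq_coneNorm (p : cone n) :
    (p.1.1 * (fundUnit n)⁻¹ + p.1.2) * (p.1.1 * fundUnit n - p.1.2) = coneNorm n p := by
  have hnorm : (coneNorm n p : ℝ) = normForm (n : ℝ) p.1.1 p.1.2 := by
    have := congrArg (Int.cast (R := ℝ)) (intCast_coneNorm p)
    simpa [normForm] using this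
  rw [hnorm, inv_fundUnit, normForm]
  linear_combination (p.1.1 : ℝ) ^ 2 * fundUnit_sq n

lemma summable_mul_comp_mul {χ u : ℕ → ℝ} {K : ℝ} (hχ : ∀ k, |χ k| ≤ 1)
    (hu : ∀ N : ℕ, |u N| ≤ K / N ^ 2) : Summable fun p : ℕ × ℕ => χ p.2 * u (p.1 * p.2) := by
  have hsq : Summable fun m : ℕ => 1 / (m : ℝ) ^ 2 := Real.summable_one_div_nat_pow.2 one_lt_two
  refine ((hsq.mul_of_nonneg hsq (fun _ => by positivity) fun _ => by positivity).mul_left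
    K).of_norm_bounded fun p => ?_
  calc ‖χ p.2 * u (p.1 * p.2)‖ = |χ p.2| * |u (p.1 * p.2)| := abs_mul _ _
    _ ≤ 1 * (K / (p.1 * p.2 : ℕ) ^ 2) := by gcongr; exacts [hχ _, hu _]
    _ = K * (1 / (p.1 : ℝ) ^ 2 * (1 / (p.2 : ℝ) ^ 2)) := by push_cast; ring

lemma summable_comp_coneNorm {u : ℕ → ℝ} {K : ℝ} (hu : ∀ N : ℕ, |u N| ≤ K / N ^ 2) :
    Summable fun p : cone n => u (coneNorm n p) := by
  have hK : 0 ≤ K := by simpa using (abs_nonneg _).trans (hu 1)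
  have hsq : Summable fun m : ℕ => 1 / (m : ℝ) ^ 2 := Real.summable_one_div_nat_pow.2 one_lt_two
  have hsq' : Summable fun m : ℕ => 1 / ((m : ℝ) + 1) ^ 2 := by
    simpa using (summable_nat_add_iff 1).2 hsq
  have hsum := ((hsq.mul_of_nonneg hsq' (fun _ => by positivity) fun _ => by positivity).mul_left
    (K * n ^ 2)).comp_injective (Subtype.val_injective (p := (· ∈ cone n)))
  refine hsum.of_norm_bounded fun p => ?_
  have hX : (1 : ℝ) ≤ p.1.1 := mod_cast fst_pos_of_mem_cone p.2
  have hY : (p.1.2 : ℝ) + 1 ≤ n * p.1.1 := mod_cast p.2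
  have hnorm : (p.1.1 : ℝ) ^ 2 ≤ coneNorm n p := mod_cast sq_fst_le_coneNorm p
  calc ‖u (coneNorm n p)‖ ≤ K / (coneNorm n p : ℝ) ^ 2 := hu _
    _ ≤ K / ((p.1.1 : ℝ) ^ 2) ^ 2 := by gcongr
    _ ≤ K * n ^ 2 * (1 / (p.1.1 : ℝ) ^ 2 * (1 / (p.1.2 + 1 : ℝ) ^ 2)) := by
        rw [div_mul_div_comm, one_mul, mul_one_div,
          div_le_div_iff₀ (by positivity) (by positivity)]
        calc K * ((p.1.1 : ℝ) ^ 2 * (p.1.2 + 1 : ℝ) ^ 2)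
            ≤ K * ((p.1.1 : ℝ) ^ 2 * (n * p.1.1) ^ 2) := by gcongr
          _ = K * n ^ 2 * ((p.1.1 : ℝ) ^ 2) ^ 2 := by ring

lemma tsum_fiber_mul {χ u : ℕ → ℝ} {N : ℕ} (hN : N ≠ 0) :
    ∑' p : (fun p : ℕ × ℕ => p.1 * p.2) ⁻¹' {N}, χ p.1.2 * u (p.1.1 * p.1.2) =
      (∑ d ∈ N.divisors, χ d) * u N := by
  have hfiber : (fun p : ℕ × ℕ => p.1 * p.2) ⁻¹' {N} = ↑N.divisorsAntidiagonal := by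
    ext p
    simp [hN]
  rw [hfiber, Finset.tsum_subtype' _ fun p : ℕ × ℕ => χ p.2 * u (p.1 * p.2), Finset.sum_mul,
    ← Nat.sum_divisorsAntidiagonal' (f := fun _ d => χ d * u N)]
  refine Finset.sum_congr rfl fun p hp => ?_
  rw [(Nat.mem_divisorsAntidiagonal.1 hp).1]

-- The bound forces `u 0 = 0`, because `K / 0 ^ 2 = 0`.
lemma tsum_mul_comp_mul_eq_tsum_comp_coneNorm {χ u : ℕ → ℝ} {K : ℝ} (hχ : ∀ k, |χ k| ≤ 1)
    (hu : ∀ N : ℕ, |u N| ≤ K / N ^ 2) (hcount : CountsConePoints n χ) :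
    ∑' p : ℕ × ℕ, χ p.2 * u (p.1 * p.2) = ∑' p : cone n, u (coneNorm n p) := by
  have hu0 : u 0 = 0 := by simpa using hu 0
  rw [← ((summable_mul_comp_mul hχ hu).hasSum.tsum_fiberwise fun p => p.1 * p.2).tsum_eq,
    ← ((summable_comp_coneNorm hu).hasSum.tsum_fiberwise (coneNorm n)).tsum_eq]
  refine tsum_congr fun N => ?_
  have hcone : ∑' p : coneNorm n ⁻¹' {N}, u (coneNorm n p) =
      Nat.card (coneNorm n ⁻¹' {N}) * u N := by
    rw [tsum_congr fun p : coneNorm n ⁻¹' {N} => congrArg u p.2, tsum_const, nsmul_eq_mul]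
  rw [hcone]
  obtain rfl | hN := eq_or_ne N 0
  · rw [tsum_congr fun p : (fun p : ℕ × ℕ => p.1 * p.2) ⁻¹' {0} =>
      show χ p.1.2 * u (p.1.1 * p.1.2) = 0 by rw [show p.1.1 * p.1.2 = 0 from p.2, hu0, mul_zero]]
    simp [hu0]
  · rw [tsum_fiber_mul hN, hcount N hN]

end

section Integral

variable {n : ℕ} {f χ : ℕ → ℝ} {H t : ℝ}

lemma abs_mul_besselIntegral_sqrt_le (hf : ∀ N, |f N| ≤ H) (hf0 : f 0 = 0) (ht : 0 < t) (N : ℕ) :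
    |f N * besselIntegral (t * √N)| ≤ H * (24 / t ^ 4 * Real.pi) / N ^ 2 := by
  obtain rfl | hN := Nat.eq_zero_or_pos N
  · simp [hf0]
  have hH : 0 ≤ H := (abs_nonneg _).trans (hf 0)
  have hsqrt : √(N : ℝ) ^ 4 = N ^ 2 := by
    rw [show 4 = 2 * 2 from rfl, pow_mul, Real.sq_sqrt N.cast_nonneg]
  rw [abs_mul, abs_of_nonneg (besselIntegral_nonneg _)]
  calc |f N| * besselIntegral (t * √N) ≤ H * (24 / (t * √N) ^ 4 * Real.pi) := by
        gcongr
        exacts [besselIntegral_nonneg _, hf N, besselIntegral_le (by positivity)]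
    _ = H * (24 / t ^ 4 * Real.pi) / N ^ 2 := by rw [mul_pow, hsqrt]; ring

lemma sqrt_mul_mul_mul_self (ht : 0 ≤ t) (α β : ℝ) : √(α * t * (β * t)) = t * √(α * β) := by
  rw [show α * t * (β * t) = t ^ 2 * (α * β) by ring, Real.sqrt_mul (sq_nonneg t),
    Real.sqrt_sq ht]

lemma integrable_productSeries_and_integral (hf : ∀ N, |f N| ≤ H) (hf0 : f 0 = 0)
    (hχ : ∀ k, |χ k| ≤ 1) (ht : 0 < t) :
    Integrable (fun v => productSeries f χ (t * Real.exp v) (t * Real.exp (-v))) ∧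
      ∫ v, productSeries f χ (t * Real.exp v) (t * Real.exp (-v)) =
        ∑' p : ℕ × ℕ, χ p.2 * (f (p.1 * p.2) * besselIntegral (t * √((p.1 * p.2 : ℕ)))) := by
  have hpos (p : ℕ × ℕ) (hp : f (p.1 * p.2) * χ p.2 ≠ 0) :
      (0 : ℝ) < p.1 * t ∧ (0 : ℝ) < p.2 * t := by
    have hne : p.1 * p.2 ≠ 0 := fun h => hp (by rw [h, hf0, zero_mul])
    obtain ⟨h1, h2⟩ := mul_ne_zero_iff.1 hne
    constructor <;> positivity
  have hterm (p : ℕ × ℕ) : f (p.1 * p.2) * χ p.2 * besselIntegral √(p.1 * t * (p.2 * t)) =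
      χ p.2 * (f (p.1 * p.2) * besselIntegral (t * √((p.1 * p.2 : ℕ)))) := by
    rw [sqrt_mul_mul_mul_self ht.le, Nat.cast_mul]
    ring
  have hsum := summable_mul_comp_mul hχ (abs_mul_besselIntegral_sqrt_le hf hf0 ht)
  simp_rw [← hterm] at hsum ⊢
  simp_rw [productSeries, ← mul_assoc _ t]
  exact ⟨integrable_tsum_mul_exp_neg_mul_exp_add hpos hsum,
    integral_tsum_mul_exp_neg_mul_exp_add hpos hsum⟩

lemma integrable_coneSeries_and_integral (hf : ∀ N, |f N| ≤ H) (hf0 : f 0 = 0) (ht : 0 < t) :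
    Integrable (fun v => coneSeries n f (t * Real.exp v) (t * Real.exp (-v))) ∧
      ∫ v, coneSeries n f (t * Real.exp v) (t * Real.exp (-v)) =
        ∑' p : cone n, f (coneNorm n p) * besselIntegral (t * √(coneNorm n p)) := by
  have hsum := summable_comp_coneNorm (n := n) (abs_mul_besselIntegral_sqrt_le hf hf0 ht)
  simp_rw [← mul_conj_eq_coneNorm, ← sqrt_mul_mul_mul_self ht.le] at hsum ⊢
  simp_rw [coneSeries, ← mul_assoc _ t]
  have hpos (p : cone n) (_ : f (coneNorm n p) ≠ 0) :=
    And.intro (mul_pos (mul_inv_fundUnit_add_pos p) ht) (mul_pos (mul_fundUnit_sub_pos p) ht)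
  exact ⟨integrable_tsum_mul_exp_neg_mul_exp_add hpos hsum,
    integral_tsum_mul_exp_neg_mul_exp_add hpos hsum⟩

theorem integral_productSeries_eq_integral_coneSeries (hf : ∀ N, |f N| ≤ H) (hf0 : f 0 = 0)
    (hχ : ∀ k, |χ k| ≤ 1) (hcount : CountsConePoints n χ) (ht : 0 < t) :
    ∫ v, productSeries f χ (t * Real.exp v) (t * Real.exp (-v)) =
      ∫ v, coneSeries n f (t * Real.exp v) (t * Real.exp (-v)) := by
  rw [(integrable_productSeries_and_integral hf hf0 hχ ht).2,
    (integrable_coneSeries_and_integral hf hf0 ht).2]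
  exact tsum_mul_comp_mul_eq_tsum_comp_coneNorm hχ (abs_mul_besselIntegral_sqrt_le hf hf0 ht)
    hcount

end Integral

end LatticeSums

section ProgressionSeries

open Matrix

variable (q : ℕ) [NeZero q]

/-- The geometric series `∑ exp (-k z)` over the `k ≥ 0` in a residue class modulo `q`, in closed
form; for `z ≤ 0` it is not the sum of the series. -/
def progSeries (z : ℝ) (b : ZMod q) : ℝ := Real.exp (-(b.val * z)) / (1 - Real.exp (-(q * z)))

/-- The part of `progSeries` singular at `0`, which does not depend on the residue class. -/
def progPole (z : ℝ) : ℝ := 1 / (Real.exp (q * z) - 1)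

/-- The part of `progSeries` smooth at `0`. -/
def progReg (z : ℝ) (b : ZMod q) : ℝ :=
  (∑ k ∈ Finset.Ico b.val q, Real.exp (-(k * z))) / ∑ k ∈ Finset.range q, Real.exp (-(k * z))

/-- `progSeries` with the term `k = 0` counted with weight `1 / 2`. -/
def halfSeries (z : ℝ) : ZMod q → ℝ := progSeries q z - Pi.single 0 (1 / 2)

/-- The smooth part of `halfSeries`. -/
def halfReg (z : ℝ) : ZMod q → ℝ := progReg q z - Pi.single 0 (1 / 2)

variable {q}

lemma exp_neg_natCast_mul (k : ℕ) (z : ℝ) : Real.exp (-(k * z)) = Real.exp (-z) ^ k := by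
  rw [← Real.exp_nat_mul, mul_neg]

lemma exp_neg_lt_one {z : ℝ} (hz : 0 < z) : Real.exp (-z) < 1 := by simpa

lemma summable_exp_neg_natCast_mul {z : ℝ} (hz : 0 < z) :
    Summable fun k : ℕ => Real.exp (-(k * z)) := by
  simp_rw [exp_neg_natCast_mul]
  exact summable_geometric_of_lt_one (Real.exp_nonneg _) (exp_neg_lt_one hz)

lemma progSeries_eq_add {z : ℝ} (hz : 0 < z) : progSeries q z = progReg q z + progPole q z • 1 := by
  ext b
  have hone : Real.exp (-z) < 1 := exp_neg_lt_one hz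
  have hpow : Real.exp (-z) ^ q < 1 := pow_lt_one₀ (Real.exp_nonneg _) hone (NeZero.ne q)
  have hexp : Real.exp (q * z) = (Real.exp (-z) ^ q)⁻¹ := by
    rw [← exp_neg_natCast_mul, Real.exp_neg, inv_inv]
  simp only [Pi.add_apply, Pi.smul_apply, Pi.one_apply, smul_eq_mul, mul_one, progSeries, progReg,
    progPole, exp_neg_natCast_mul, hexp, geom_sum_Ico hone.ne b.val_lt.le, geom_sum_eq hone.ne]
  have h1 : Real.exp (-z) - 1 ≠ 0 := by linarith
  have h2 : Real.exp (-z) ^ q - 1 ≠ 0 := by linarith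
  have h3 : 1 - Real.exp (-z) ^ q ≠ 0 := by linarith
  field_simp
  ring

lemma halfSeries_eq_add {z : ℝ} (hz : 0 < z) : halfSeries q z = halfReg q z + progPole q z • 1 := by
  rw [halfSeries, halfReg, progSeries_eq_add hz]
  abel

lemma summable_periodic_mul_exp (p : ZMod q → ℝ) {z : ℝ} (hz : 0 < z) :
    Summable fun k : ℕ => p k * Real.exp (-(k * z)) := by
  refine ((summable_exp_neg_natCast_mul hz).mul_left (∑ b, |p b|)).of_norm_bounded fun k => ?_
  rw [norm_mul, Real.norm_of_nonneg (Real.exp_nonneg _), Real.norm_eq_abs]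
  gcongr
  exact Finset.single_le_sum (f := fun b => |p b|) (fun _ _ => abs_nonneg _) (Finset.mem_univ _)

lemma tsum_periodic_mul_exp (p : ZMod q → ℝ) {z : ℝ} (hz : 0 < z) :
    ∑' k : ℕ, p k * Real.exp (-(k * z)) = p ⬝ᵥ progSeries q z := by
  have hpow : Real.exp (-(q * z)) < 1 :=
    exp_neg_lt_one (mul_pos (Nat.cast_pos.2 (NeZero.pos q)) hz)
  rw [Nat.sumByResidueClasses (summable_periodic_mul_exp p hz) q]
  refine Finset.sum_congr rfl fun b _ => ?_
  have hterm (m : ℕ) : p ((b.val + q * m : ℕ) : ZMod q) * Real.exp (-((b.val + q * m : ℕ) * z)) =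
      p b * Real.exp (-(b.val * z)) * Real.exp (-(q * z)) ^ m := by
    rw [← exp_neg_natCast_mul, mul_assoc, ← Real.exp_add]
    push_cast
    rw [ZMod.natCast_zmod_val, ZMod.natCast_self, zero_mul, add_zero]
    ring_nf
  rw [tsum_congr hterm, tsum_mul_left, tsum_geometric_of_lt_one (Real.exp_nonneg _) hpow,
    progSeries, mul_assoc, div_eq_mul_inv]

lemma hasSum_periodic_mul_exp (p : ZMod q → ℝ) {z : ℝ} (hz : 0 < z) :
    HasSum (fun k : ℕ => p k * Real.exp (-(k * z))) (p ⬝ᵥ progSeries q z) :=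
  tsum_periodic_mul_exp p hz ▸ (summable_periodic_mul_exp p hz).hasSum

lemma tsum_prod_periodic_mul_exp {r : ℕ} [NeZero r] (c : Matrix (ZMod q) (ZMod r) ℝ) {x y : ℝ}
    (hx : 0 < x) (hy : 0 < y) :
    ∑' p : ℕ × ℕ, c p.1 p.2 * Real.exp (-(p.1 * x + p.2 * y)) =
      progSeries q x ⬝ᵥ c *ᵥ progSeries r y := by
  have hexp (k l : ℕ) : c k l * Real.exp (-(k * x + l * y)) =
      Real.exp (-(k * x)) * (c k l * Real.exp (-(l * y))) := by
    rw [neg_add, Real.exp_add]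
    ring
  have hsum : Summable fun p : ℕ × ℕ => c p.1 p.2 * Real.exp (-(p.1 * x + p.2 * y)) := by
    refine (((summable_exp_neg_natCast_mul hx).mul_of_nonneg (summable_exp_neg_natCast_mul hy)
      (fun _ => Real.exp_nonneg _) fun _ => Real.exp_nonneg _).mul_left
      (∑ a, ∑ b, |c a b|)).of_norm_bounded fun p => ?_
    rw [hexp, norm_mul, norm_mul, Real.norm_of_nonneg (Real.exp_nonneg _),
      Real.norm_of_nonneg (Real.exp_nonneg _), mul_left_comm]
    gcongr
    calc |c p.1 p.2| ≤ ∑ b, |c p.1 b| :=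
          Finset.single_le_sum (f := fun b => |c p.1 b|) (fun _ _ => abs_nonneg _)
            (Finset.mem_univ _)
      _ ≤ ∑ a, ∑ b, |c a b| :=
          Finset.single_le_sum (f := fun a => ∑ b, |c a b|)
            (fun _ _ => Finset.sum_nonneg fun _ _ => abs_nonneg _) (Finset.mem_univ _)
  rw [hsum.tsum_prod]
  simp_rw [hexp, tsum_mul_left, tsum_periodic_mul_exp (c _) hy, mul_comm (Real.exp _)]
  exact (tsum_periodic_mul_exp (c *ᵥ progSeries r y) hx).trans (dotProduct_comm _ _)

lemma sum_range_periodic_mul_exp (p : ZMod q → ℝ) (M : ℕ) {z : ℝ} (hz : 0 < z) :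
    ∑ k ∈ Finset.range M, p k * Real.exp (-(k * z)) =
      p ⬝ᵥ progSeries q z - Real.exp (-(M * z)) * ((fun b => p (b + M)) ⬝ᵥ progSeries q z) := by
  rw [← tsum_periodic_mul_exp p hz, ← tsum_periodic_mul_exp _ hz, ← tsum_mul_left,
    ← (summable_periodic_mul_exp p hz).sum_add_tsum_nat_add M, eq_sub_iff_add_eq]
  congr 2 with k
  rw [mul_left_comm, ← Real.exp_add]
  push_cast
  ring_nf

lemma dotProduct_halfSeries (p : ZMod q → ℝ) (z : ℝ) :
    p ⬝ᵥ halfSeries q z = p ⬝ᵥ progSeries q z - p 0 / 2 := by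
  rw [halfSeries, dotProduct_sub, dotProduct_single, mul_one_div]

-- Averaging the sums over `0 ≤ k < M` and `0 < k ≤ M` produces the half weights.
lemma sum_range_add_sum_range_succ_periodic_mul_exp (p : ZMod q → ℝ) (M : ℕ) {z : ℝ}
    (hz : 0 < z) :
    ∑ k ∈ Finset.range M, p k * Real.exp (-(k * z)) +
        ∑ k ∈ Finset.range M, p (k + 1 : ℕ) * Real.exp (-((k + 1 : ℕ) * z)) =
      2 * (p ⬝ᵥ halfSeries q z -
        Real.exp (-(M * z)) * ((fun b => p (b + M)) ⬝ᵥ halfSeries q z)) := by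
  have hshift := (Finset.sum_range_succ' (fun k : ℕ => p k * Real.exp (-(k * z))) M).symm.trans
    (Finset.sum_range_succ (fun k : ℕ => p k * Real.exp (-(k * z))) M)
  simp only [Nat.cast_zero, zero_mul, neg_zero, Real.exp_zero, mul_one] at hshift
  rw [dotProduct_halfSeries, dotProduct_halfSeries, zero_add]
  linear_combination 2 * sum_range_periodic_mul_exp p M hz + hshift

end ProgressionSeries

section ClosedForms

open Matrix

variable {q D : ℕ}

/-- The coefficients of `productSeries` for `f` and `χ` periodic modulo `q` and `D`. -/
def productMatrix (f : ZMod q → ℝ) (χ : ZMod D → ℝ) : Matrix (ZMod q) (ZMod (q * D)) ℝ :=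
  of fun a k =>
    f (a * ZMod.castHom (dvd_mul_right q D) _ k) * χ (ZMod.castHom (dvd_mul_left D q) _ k)

/-- The coefficients of `coneSeries` for `f` periodic modulo `q`. -/
def normMatrix (n : ZMod q) (f : ZMod q → ℝ) : Matrix (ZMod q) (ZMod q) ℝ :=
  of fun a b => f (normForm n a b)

variable {n : ℕ} {x y : ℝ}

lemma productSeries_eq_dotProduct [NeZero q] [NeZero D] (f : ZMod q → ℝ) (χ : ZMod D → ℝ)
    (hx : 0 < x) (hy : 0 < y) :
    productSeries (fun N => f N) (fun k => χ k) x y =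
      progSeries q x ⬝ᵥ productMatrix f χ *ᵥ progSeries (q * D) y := by
  rw [← tsum_prod_periodic_mul_exp _ hx hy]
  simp [productSeries, productMatrix]

lemma summable_cone_mul_exp {u : ℕ × ℕ → ℝ} {H : ℝ} (hu : ∀ p, |u p| ≤ H) (hx : 0 < x)
    (hy : 0 < y) :
    Summable fun p : ℕ × ℕ => (cone n).indicator (fun p => u p *
      Real.exp (-((p.1 * (fundUnit n)⁻¹ + p.2) * x + (p.1 * fundUnit n - p.2) * y))) p := by
  have hH : 0 ≤ H := (abs_nonneg _).trans (hu 0)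
  have hε := inv_pos.2 (fundUnit_pos n)
  refine (((summable_exp_neg_natCast_mul (mul_pos hε (add_pos hx hy))).mul_of_nonneg
    (summable_exp_neg_natCast_mul hx) (fun _ => Real.exp_nonneg _)
    fun _ => Real.exp_nonneg _).mul_left H).of_norm_bounded fun p => ?_
  by_cases hp : p ∈ cone n
  · rw [Set.indicator_of_mem hp, norm_mul, Real.norm_of_nonneg (Real.exp_nonneg _), ← Real.exp_add]
    have hY : (p.2 : ℝ) ≤ n * p.1 := mod_cast le_of_lt hp
    gcongr
    · exact hu p
    · rw [inv_fundUnit]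
      nlinarith [mul_le_mul_of_nonneg_right hY hy.le]
  · rw [Set.indicator_of_notMem hp, norm_zero]
    positivity

lemma hasSum_coneSeries {f : ℕ → ℝ} {H : ℝ} (hf : ∀ N, |f N| ≤ H) (hx : 0 < x) (hy : 0 < y) :
    HasSum (fun X : ℕ => ∑ Y ∈ Finset.range (n * X), f (X ^ 2 + Y * (n * X - Y)) *
      Real.exp (-((X * (fundUnit n)⁻¹ + Y) * x + (X * fundUnit n - Y) * y)))
      (coneSeries n f x y) := by
  let g (p : ℕ × ℕ) : ℝ := f (p.1 ^ 2 + p.2 * (n * p.1 - p.2)) *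
    Real.exp (-((p.1 * (fundUnit n)⁻¹ + p.2) * x + (p.1 * fundUnit n - p.2) * y))
  have hseries : coneSeries n f x y = ∑' p, (cone n).indicator g p := tsum_subtype (cone n) g
  rw [hseries]
  refine (summable_cone_mul_exp (fun p => hf _) hx hy).hasSum.prod_fiberwise fun X => ?_
  have hrow : ∑ Y ∈ Finset.range (n * X), g (X, Y) =
      ∑ Y ∈ Finset.range (n * X), (cone n).indicator g (X, Y) :=
    Finset.sum_congr rfl fun Y hY =>
      (Set.indicator_of_mem (show (X, Y) ∈ cone n from Finset.mem_range.1 hY) g).symm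
  change HasSum (fun Y => (cone n).indicator g (X, Y)) (∑ Y ∈ Finset.range (n * X), g (X, Y))
  rw [hrow]
  exact hasSum_sum_of_ne_finset_zero fun Y hY =>
    Set.indicator_of_notMem (by simpa [cone] using hY) g

lemma natCast_cone_row {X Y : ℕ} (hY : Y ≤ n * X) :
    ((X ^ 2 + Y * (n * X - Y) : ℕ) : ZMod q) = normForm (n : ZMod q) X Y := by
  push_cast [normForm, Nat.cast_sub hY]
  ring

lemma normForm_mul_sub {R : Type*} [CommRing R] (n X Y : R) :
    normForm n X (n * X - Y) = normForm n X Y := by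
  unfold normForm
  ring

lemma normForm_add_mul {R : Type*} [CommRing R] (n X Y : R) :
    normForm n X (Y + n * X) = normForm (-n) X Y := by
  unfold normForm
  ring

/-- The variable dual to `X` in `coneSeries n f x y` when `x - y` is the variable dual to `Y`. -/
def coneDual (n : ℕ) (x y : ℝ) : ℝ := x / fundUnit n + fundUnit n * y

lemma coneDual_pos (n : ℕ) (hx : 0 < x) (hy : 0 < y) : 0 < coneDual n x y := by
  have := fundUnit_pos n
  unfold coneDual
  positivity

lemma coneDual_swap (n : ℕ) (x y : ℝ) : coneDual n y x = coneDual n x y + n * (x - y) := by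
  simp only [coneDual, div_eq_mul_inv, inv_fundUnit]
  ring

variable [NeZero q] (f : ZMod q → ℝ)

lemma exists_abs_natCast_le : ∃ H, ∀ N : ℕ, |f N| ≤ H := by
  obtain ⟨H, hH⟩ := (Set.finite_range fun b => |f b|).bddAbove
  exact ⟨H, fun N => hH ⟨N, rfl⟩⟩

lemma hasSum_coneSeries_row (hx : 0 < x) (hy : 0 < y) :
    HasSum (fun X : ℕ => Real.exp (-(X * coneDual n x y)) * ∑ Y ∈ Finset.range (n * X),
      normMatrix (n : ZMod q) f X Y * Real.exp (-(Y * (x - y))))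
      (coneSeries n (fun N => f N) x y) := by
  obtain ⟨H, hH⟩ := exists_abs_natCast_le f
  refine (hasSum_coneSeries hH hx hy).congr_fun fun X => ?_
  rw [Finset.mul_sum]
  refine Finset.sum_congr rfl fun Y hY => ?_
  rw [natCast_cone_row (Finset.mem_range.1 hY).le, mul_left_comm, ← Real.exp_add]
  congr 2
  rw [coneDual]
  ring

-- The points of a row are listed backwards, `Y + 1` standing for `n X - Y`.
lemma hasSum_coneSeries_swap_row (hx : 0 < x) (hy : 0 < y) :
    HasSum (fun X : ℕ => Real.exp (-(X * coneDual n x y)) * ∑ Y ∈ Finset.range (n * X),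
      normMatrix (n : ZMod q) f X (Y + 1 : ℕ) * Real.exp (-((Y + 1 : ℕ) * (x - y))))
      (coneSeries n (fun N => f N) y x) := by
  obtain ⟨H, hH⟩ := exists_abs_natCast_le f
  refine (hasSum_coneSeries hH hy hx).congr_fun fun X => ?_
  rw [Finset.mul_sum, ← Finset.sum_range_reflect]
  refine Finset.sum_congr rfl fun Y hY => ?_
  have hlt : Y < n * X := Finset.mem_range.1 hY
  have hreflect : n * X - 1 - Y + 1 = n * X - Y := by omega
  rw [hreflect, natCast_cone_row hlt.le, mul_left_comm, ← Real.exp_add, normMatrix, of_apply,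
    Nat.cast_sub hlt.le, Nat.cast_sub hlt.le, Nat.cast_mul, Nat.cast_mul, normForm_mul_sub,
    coneDual, div_eq_mul_inv, inv_fundUnit]
  congr 2
  ring

lemma coneSeries_add_swap (hy : 0 < y) (hyx : y < x) :
    coneSeries n (fun N => f N) x y + coneSeries n (fun N => f N) y x =
      2 * (progSeries q (coneDual n x y) ⬝ᵥ normMatrix n f *ᵥ halfSeries q (x - y) -
        progSeries q (coneDual n y x) ⬝ᵥ normMatrix (-n) f *ᵥ halfSeries q (x - y)) := by
  have hx := hy.trans hyx
  have hrows := (hasSum_coneSeries_row (n := n) f hx hy).add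
    (hasSum_coneSeries_swap_row (n := n) f hx hy)
  have hclosed := ((hasSum_periodic_mul_exp (normMatrix (n : ZMod q) f *ᵥ halfSeries q (x - y))
    (coneDual_pos n hx hy)).sub (hasSum_periodic_mul_exp
      (normMatrix (-n : ZMod q) f *ᵥ halfSeries q (x - y)) (coneDual_pos n hy hx))).mul_left 2
  rw [dotProduct_comm, dotProduct_comm (progSeries q (coneDual n y x))]
  refine hrows.unique (hclosed.congr_fun fun X => ?_)
  have hshift : (fun b => normMatrix (n : ZMod q) f X (b + (n * X : ℕ))) =
      normMatrix (-n : ZMod q) f X := by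
    ext b
    simp only [normMatrix, of_apply, Nat.cast_mul, normForm_add_mul]
  have hexp : Real.exp (-(X * coneDual n y x)) =
      Real.exp (-(X * coneDual n x y)) * Real.exp (-((n * X : ℕ) * (x - y))) := by
    rw [coneDual_swap, ← Real.exp_add]
    push_cast
    ring_nf
  rw [← mul_add, sum_range_add_sum_range_succ_periodic_mul_exp _ _ (sub_pos.2 hyx), hshift, hexp]
  simp only [mulVec]
  ring

end ClosedForms

section TaylorEstimates

open Filter Asymptotics Set

variable {α : Type*} {s : Set α} {M : ℝ}

lemma isBigO_sub_apply_zero {E : Type*} [NormedAddCommGroup E] [NormedSpace ℝ E] [ProperSpace E]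
    {φ : E → ℝ} (hφ : ContDiff ℝ 1 φ) {u : α → E} (hu : ∀ p ∈ s, ‖u p‖ ≤ M) :
    (fun p => φ (u p) - φ 0) =O[𝓟 s] u := by
  obtain ⟨K, hK⟩ := hφ.contDiffOn.exists_lipschitzOnWith one_ne_zero
    (convex_closedBall (0 : E) M) (isCompact_closedBall 0 M)
  refine isBigO_principal.2 ⟨K, fun p hp => ?_⟩
  simpa using hK.norm_sub_le (mem_closedBall_zero_iff.2 (hu p hp))
    (Metric.mem_closedBall_self ((norm_nonneg _).trans (hu p hp)))

lemma isBigO_sub_sub_deriv_zero_mul {φ : ℝ → ℝ} (hφ : ContDiff ℝ 2 φ) {u v : α → ℝ}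
    (hu : ∀ p ∈ s, |u p| ≤ M) (hv : ∀ p ∈ s, |v p| ≤ M) :
    (fun p => φ (u p) - φ (v p) - deriv φ 0 * (u p - v p)) =O[𝓟 s]
      fun p => (|u p| + |v p|) * (u p - v p) := by
  have hderiv : ContDiff ℝ 1 (deriv φ) := hφ.deriv' (n := 1)
  obtain ⟨K, hK0, hK⟩ := (isBigO_sub_apply_zero (s := Icc (-M) M) hderiv (u := id)
    fun p hp => abs_le.2 hp).exists_nonneg
  refine isBigO_principal.2 ⟨K, fun p hp => ?_⟩
  set r := max |u p| |v p|
  have hdiff (x : ℝ) : HasDerivAt (fun x => φ x - deriv φ 0 * x) (deriv φ x - deriv φ 0) x := by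
    simpa using (hφ.differentiable two_ne_zero x).hasDerivAt.fun_sub
      ((hasDerivAt_id x).const_mul (deriv φ 0))
  have hbound (x : ℝ) (hx : x ∈ Icc (-r) r) : ‖deriv φ x - deriv φ 0‖ ≤ K * r :=
    (isBigOWith_principal.1 hK x (abs_le.1 ((abs_le.2 hx).trans
      (max_le (hu p hp) (hv p hp))))).trans (mul_le_mul_of_nonneg_left (abs_le.2 hx) hK0)
  have hmean := (convex_Icc (-r) r).norm_image_sub_le_of_norm_hasDerivWithin_le
    (fun x _ => (hdiff x).hasDerivWithinAt) hbound
    (abs_le.1 (le_max_right |u p| |v p|)) (abs_le.1 (le_max_left |u p| |v p|))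
  calc ‖φ (u p) - φ (v p) - deriv φ 0 * (u p - v p)‖
      = ‖φ (u p) - deriv φ 0 * u p - (φ (v p) - deriv φ 0 * v p)‖ := by ring_nf
    _ ≤ K * r * ‖u p - v p‖ := hmean
    _ ≤ K * (|u p| + |v p|) * ‖u p - v p‖ := by
      gcongr
      exact max_le_add_of_nonneg (abs_nonneg _) (abs_nonneg _)
    _ = K * ‖(|u p| + |v p|) * (u p - v p)‖ := by
      rw [norm_mul, Real.norm_of_nonneg (add_nonneg (abs_nonneg _) (abs_nonneg _)), mul_assoc]

end TaylorEstimates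

section ProgressionEstimates

open Filter Asymptotics Set Matrix

variable {q : ℕ} [NeZero q]

lemma sum_range_exp_pos (q : ℕ) [NeZero q] (z : ℝ) :
    0 < ∑ k ∈ Finset.range q, Real.exp (-(k * z)) :=
  Finset.sum_pos (fun _ _ => Real.exp_pos _) ⟨0, Finset.mem_range.2 (NeZero.pos q)⟩

lemma contDiff_progReg {m : WithTop ℕ∞} : ContDiff ℝ m (progReg q) :=
  contDiff_pi.2 fun _ =>
    ContDiff.div (by fun_prop) (by fun_prop) fun z => (sum_range_exp_pos q z).ne'

lemma contDiff_halfReg {m : WithTop ℕ∞} : ContDiff ℝ m (halfReg q) :=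
  contDiff_progReg.sub contDiff_const

lemma progReg_zero (b : ZMod q) : progReg q 0 b = 1 - b.val / q := by
  have : (q : ℝ) ≠ 0 := NeZero.ne _
  simp [progReg, Nat.cast_sub b.val_lt.le]
  field_simp

lemma sum_Ico_natCast {a b : ℕ} (hab : a ≤ b) :
    ∑ k ∈ Finset.Ico a b, (k : ℝ) = (b * (b - 1) - a * (a - 1)) / 2 := by
  induction b, hab using Nat.le_induction with
  | base => simp
  | succ b hb ih =>
    rw [Finset.sum_Ico_succ_top hb, ih]
    push_cast
    ring

/-- The derivative of `progReg` at `0`. -/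
def progDeriv (q : ℕ) (b : ZMod q) : ℝ := ((b.val : ℝ) ^ 2 - q * b.val) / (2 * q)

lemma hasDerivAt_progReg_zero : HasDerivAt (progReg q) (progDeriv q) 0 := by
  refine hasDerivAt_pi.2 fun b => ?_
  have hsum (s : Finset ℕ) : HasDerivAt (fun z : ℝ => ∑ k ∈ s, Real.exp (-(k * z)))
      (-∑ k ∈ s, (k : ℝ)) 0 := by
    rw [← Finset.sum_neg_distrib]
    exact HasDerivAt.fun_sum fun k _ => by
      simpa using ((hasDerivAt_id (0 : ℝ)).const_mul (k : ℝ)).neg.exp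
  have hq : (q : ℝ) ≠ 0 := NeZero.ne _
  convert! (hsum (Finset.Ico b.val q)).div (hsum (Finset.range q)) (sum_range_exp_pos q 0).ne'
    using 1
  rw [Finset.range_eq_Ico, sum_Ico_natCast b.val_lt.le, sum_Ico_natCast (Nat.zero_le q)]
  simp [progDeriv, Nat.cast_sub b.val_lt.le]
  field_simp
  ring

lemma progReg_nonneg (z : ℝ) (b : ZMod q) : 0 ≤ progReg q z b :=
  div_nonneg (Finset.sum_nonneg fun _ _ => Real.exp_nonneg _) (sum_range_exp_pos q z).le

lemma progReg_le_one (z : ℝ) (b : ZMod q) : progReg q z b ≤ 1 := by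
  refine (div_le_one (sum_range_exp_pos q z)).2 (Finset.sum_le_sum_of_subset_of_nonneg ?_
    fun _ _ _ => Real.exp_nonneg _)
  rw [Finset.range_eq_Ico]
  exact Finset.Ico_subset_Ico_left (Nat.zero_le _)

lemma progReg_le_div {z : ℝ} (hz : 0 < z) {b : ZMod q} (hb : b ≠ 0) : progReg q z b ≤ q / z := by
  have hden : 1 ≤ ∑ k ∈ Finset.range q, Real.exp (-(k * z)) := by
    simpa using Finset.single_le_sum (f := fun k : ℕ => Real.exp (-(k * z)))
      (fun _ _ => Real.exp_nonneg _) (Finset.mem_range.2 (NeZero.pos q))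
  have hterm (k : ℕ) (hk : k ∈ Finset.Ico b.val q) : Real.exp (-(k * z)) ≤ 1 / z := by
    have hk1 : (1 : ℝ) ≤ k := by
      exact_mod_cast (ZMod.val_pos.2 hb).trans_le (Finset.mem_Ico.1 hk).1
    rw [Real.exp_neg, ← one_div]
    exact one_div_le_one_div_of_le hz (by nlinarith [Real.add_one_le_exp (k * z)])
  calc progReg q z b ≤ ∑ k ∈ Finset.Ico b.val q, Real.exp (-(k * z)) :=
        div_le_self (Finset.sum_nonneg fun _ _ => Real.exp_nonneg _) hden
    _ ≤ (q - b.val : ℕ) * (1 / z) := by simpa using Finset.sum_le_sum hterm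
    _ ≤ q * (1 / z) := by gcongr; exact Nat.sub_le _ _
    _ = q / z := mul_one_div _ _

lemma progPole_pos {z : ℝ} (hz : 0 < z) : 0 < progPole q z := by
  have hq : (0 : ℝ) < q := Nat.cast_pos.2 (NeZero.pos q)
  have := Real.add_one_lt_exp (mul_pos hq hz).ne'
  exact one_div_pos.2 (by nlinarith [mul_pos hq hz])

lemma progPole_le {z : ℝ} (hz : 0 < z) : progPole q z ≤ 1 / (q * z) := by
  have hq : (0 : ℝ) < q := Nat.cast_pos.2 (NeZero.pos q)
  exact one_div_le_one_div_of_le (mul_pos hq hz) (by linarith [Real.add_one_le_exp (q * z)])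

lemma one_div_sub_one_le_progPole {z : ℝ} (hz : 0 < z) : 1 / (q * z) - 1 ≤ progPole q z := by
  have hu : 0 < q * z := mul_pos (Nat.cast_pos.2 (NeZero.pos q)) hz
  have hexp : Real.exp (q * z) - 1 ≤ q * z * Real.exp (q * z) := by
    have := mul_le_mul_of_nonneg_right (Real.add_one_le_exp (-(q * z))) (Real.exp_nonneg (q * z))
    rw [← Real.exp_add, neg_add_cancel, Real.exp_zero] at this
    linarith
  have hpos : 0 < Real.exp (q * z) - 1 := by linarith [Real.add_one_lt_exp hu.ne']
  rw [progPole, div_sub_one hu.ne', div_le_div_iff₀ hu hpos]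
  nlinarith

variable {α : Type*} {s : Set α} {z d D ρ : α → ℝ}

lemma isBigO_progPole (hz : ∀ p ∈ s, 0 < z p) :
    (fun p => progPole q (z p)) =O[𝓟 s] fun p => (z p)⁻¹ :=
  isBigO_principal.2 ⟨1, fun p hp => by
    have hzp := hz p hp
    have hq : (1 : ℝ) ≤ q := Nat.one_le_cast.2 NeZero.one_le
    rw [Real.norm_of_nonneg (progPole_pos hzp).le, Real.norm_of_nonneg (by positivity), one_mul,
      ← one_div]
    exact (progPole_le hzp).trans
      (one_div_le_one_div_of_le hzp (le_mul_of_one_le_left hzp.le hq))⟩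

-- If `D ~ d` to second order then `progPole q z * D` is close to `d / (q z)`.
lemma isBigO_progPole_mul_sub (hz : ∀ p ∈ s, 0 < z p)
    (hD : (fun p => D p - d p) =O[𝓟 s] fun p => z p * ρ p) (hd : d =O[𝓟 s] ρ) :
    (fun p => progPole q (z p) * D p - d p / (q * z p)) =O[𝓟 s] ρ := by
  have hpole : (fun p => progPole q (z p) - 1 / (q * z p)) =O[𝓟 s] fun _ => (1 : ℝ) :=
    isBigO_principal.2 ⟨1, fun p hp => by
      have hzp := hz p hp
      rw [norm_one, mul_one, Real.norm_eq_abs, abs_le]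
      exact ⟨by linarith [one_div_sub_one_le_progPole (q := q) hzp],
        by linarith [progPole_le (q := q) hzp]⟩⟩
  have hfirst : (fun p => progPole q (z p) * (D p - d p)) =O[𝓟 s] ρ :=
    ((isBigO_progPole hz).mul hD).congr' .rfl <| eventually_principal.2 fun p hp =>
      inv_mul_cancel_left₀ (hz p hp).ne' _
  refine (hfirst.add (hpole.mul hd |>.congr_right fun p => one_mul _)).congr_left fun p => ?_
  ring

lemma isBigO_progReg_one (z : α → ℝ) (b : ZMod q) :
    (fun p => progReg q (z p) b) =O[𝓟 s] fun _ => (1 : ℝ) :=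
  isBigO_principal.2 ⟨1, fun p _ => by
    simpa [abs_of_nonneg (progReg_nonneg (z p) b)] using progReg_le_one (z p) b⟩

lemma isBigO_progReg_inv (hz : ∀ p ∈ s, 0 < z p) {b : ZMod q} (hb : b ≠ 0) :
    (fun p => progReg q (z p) b) =O[𝓟 s] fun p => (z p)⁻¹ :=
  isBigO_principal.2 ⟨q, fun p hp => by
    rw [Real.norm_of_nonneg (progReg_nonneg (z p) b),
      Real.norm_of_nonneg (inv_nonneg.2 (hz p hp).le)]
    exact progReg_le_div (hz p hp) hb⟩

lemma isBigO_progSeries_one (hz : ∀ p ∈ s, 0 < z p)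
    (hinv : (fun p => (z p)⁻¹) =O[𝓟 s] fun _ => (1 : ℝ)) (b : ZMod q) :
    (fun p => progSeries q (z p) b) =O[𝓟 s] fun _ => (1 : ℝ) :=
  ((isBigO_progReg_one z b).add ((isBigO_progPole (q := q) hz).trans hinv)).congr'
    (eventually_principal.2 fun p hp => by simp [progSeries_eq_add (hz p hp)]) .rfl

lemma isBigO_progSeries_inv (hz : ∀ p ∈ s, 0 < z p) {b : ZMod q} (hb : b ≠ 0) :
    (fun p => progSeries q (z p) b) =O[𝓟 s] fun p => (z p)⁻¹ :=
  ((isBigO_progReg_inv hz hb).add (isBigO_progPole (q := q) hz)).congr'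
    (eventually_principal.2 fun p hp => by simp [progSeries_eq_add (hz p hp)]) .rfl

lemma isBigO_halfSeries_one (hz : ∀ p ∈ s, 0 < z p)
    (hinv : (fun p => (z p)⁻¹) =O[𝓟 s] fun _ => (1 : ℝ)) (b : ZMod q) :
    (fun p => halfSeries q (z p) b) =O[𝓟 s] fun _ => (1 : ℝ) :=
  (isBigO_progSeries_one hz hinv b).sub (isBigO_const_const _ one_ne_zero _)

lemma isBigO_halfSeries_inv (hz : ∀ p ∈ s, 0 < z p) {b : ZMod q} (hb : b ≠ 0) :
    (fun p => halfSeries q (z p) b) =O[𝓟 s] fun p => (z p)⁻¹ :=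
  (isBigO_progSeries_inv hz hb).congr_left fun p => by simp [halfSeries, hb]

end ProgressionEstimates

section BilinearEstimates

open Filter Asymptotics Matrix

variable {ι κ α : Type*} [Fintype ι] [Fintype κ] {c : Matrix ι κ ℝ} {ρ : α → ℝ}

lemma isBigO_dotProduct_mulVec {l : Filter α} {u : α → ι → ℝ} {v : α → κ → ℝ}
    (h : ∀ i j, c i j ≠ 0 → (fun p => u p i * v p j) =O[l] ρ) :
    (fun p => u p ⬝ᵥ c *ᵥ v p) =O[l] ρ := by
  have hsum : (fun p => ∑ i, ∑ j, c i j * (u p i * v p j)) =O[l] ρ :=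
    IsBigO.fun_sum fun i _ => IsBigO.fun_sum fun j _ => by
      by_cases hc : c i j = 0
      · simpa [hc] using isBigO_zero ρ l
      · exact (h i j hc).const_mul_left _
  refine hsum.congr_left fun p => ?_
  simp only [dotProduct, mulVec, Finset.mul_sum]
  exact Finset.sum_congr rfl fun i _ => Finset.sum_congr rfl fun j _ => by ring

lemma contDiff_dotProduct_mulVec {E : Type*} [NormedAddCommGroup E] [NormedSpace ℝ E]
    {m : WithTop ℕ∞} {u : E → ι → ℝ} {v : E → κ → ℝ} (hu : ContDiff ℝ m u) (hv : ContDiff ℝ m v) :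
    ContDiff ℝ m fun z => u z ⬝ᵥ c *ᵥ v z :=
  ContDiff.sum fun i _ => (contDiff_pi.1 hu i).mul <| ContDiff.sum fun j _ =>
    contDiff_const.mul (contDiff_pi.1 hv j)

lemma isBigO_dotProduct_mulVec_sub {s : Set α} {u : ℝ → ι → ℝ} {v : ℝ → κ → ℝ}
    (hu : ContDiff ℝ 1 u) (hv : ContDiff ℝ 1 v) {x y : α → ℝ} {M : ℝ} (hx : ∀ p ∈ s, |x p| ≤ M)
    (hy : ∀ p ∈ s, |y p| ≤ M) (hxρ : x =O[𝓟 s] ρ) (hyρ : y =O[𝓟 s] ρ) :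
    (fun p => u (x p) ⬝ᵥ c *ᵥ v (y p) - u 0 ⬝ᵥ c *ᵥ v 0) =O[𝓟 s] ρ :=
  (isBigO_sub_apply_zero (u := fun p => (x p, y p))
    (contDiff_dotProduct_mulVec (c := c) (hu.comp contDiff_fst) (hv.comp contDiff_snd))
    fun p hp => max_le (hx p hp) (hy p hp)).trans (hxρ.prod_left hyρ)

end BilinearEstimates

section ConstantTerm

open MeasureTheory Filter Asymptotics Set

/-- The part of the sector `0 < y < x` where the curve `(t exp v, t exp (-v))`, `0 < v`, spends
time `log (1 / t)`. -/
def sectorCusp : Set (ℝ × ℝ) := {p | 0 < p.2 ∧ p.2 < p.1 ∧ p.1 ≤ 1}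

/-- The part of the sector `0 < y < x` which the curve `(t exp v, t exp (-v))` enters after leaving
the cusp, if `t ≤ 1 / 2`. -/
def sectorTail : Set (ℝ × ℝ) := {p | 0 < p.2 ∧ p.2 ≤ 1 / 4 ∧ 1 ≤ p.1}

section

variable {R K L : ℝ} {Φ : ℝ → ℝ}

lemma abs_integral_Ioc_sub_le (hK : 0 ≤ K) (hL : 0 < L) (hint : IntegrableOn Φ (Ioc 0 L))
    (hΦ : ∀ v ∈ Ioc 0 L, |Φ v - R| ≤ K * (Real.exp (v - L) + Real.exp (-v))) :
    |(∫ v in Ioc 0 L, Φ v) - R * L| ≤ 2 * K := by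
  have hprim (v : ℝ) : HasDerivAt (fun v => K * (Real.exp (v - L) - Real.exp (-v)))
      (K * (Real.exp (v - L) + Real.exp (-v))) v := by
    simpa using (((hasDerivAt_id v).sub_const L).exp.fun_sub (hasDerivAt_neg v).exp).const_mul K
  have hcont : Continuous fun v => K * (Real.exp (v - L) + Real.exp (-v)) := by fun_prop
  have hsub : ∫ v in Ioc 0 L, (Φ v - R) = (∫ v in Ioc 0 L, Φ v) - R * L := by
    rw [integral_sub hint (by simp)]
    simp [hL.le, mul_comm]
  rw [← hsub]
  calc |∫ v in Ioc 0 L, (Φ v - R)|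
      ≤ ∫ v in Ioc 0 L, K * (Real.exp (v - L) + Real.exp (-v)) :=
        (Real.norm_eq_abs _).symm.trans_le <| norm_integral_le_of_norm_le
          (hcont.integrableOn_Icc.mono_set Ioc_subset_Icc_self)
          ((ae_restrict_iff' measurableSet_Ioc).2 (Eventually.of_forall hΦ))
    _ = K * (1 - Real.exp (-L)) - K * (Real.exp (-L) - 1) := by
      rw [← intervalIntegral.integral_of_le hL.le,
        intervalIntegral.integral_eq_sub_of_hasDerivAt (fun v _ => hprim v)
          (hcont.intervalIntegrable _ _)]
      simp
    _ ≤ 2 * K := by nlinarith [Real.exp_pos (-L)]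

lemma abs_integral_Ioi_le (hΦ : ∀ v ∈ Ioi L, |Φ v| ≤ K * Real.exp (L - v)) :
    |∫ v in Ioi L, Φ v| ≤ K := by
  have hexp (v : ℝ) : K * Real.exp (L - v) = K * Real.exp L * Real.exp (-v) := by
    rw [sub_eq_add_neg, Real.exp_add, mul_assoc]
  simp_rw [hexp] at hΦ
  calc |∫ v in Ioi L, Φ v| ≤ ∫ v in Ioi L, K * Real.exp L * Real.exp (-v) :=
        (Real.norm_eq_abs _).symm.trans_le <|
          norm_integral_le_of_norm_le ((integrableOn_exp_neg_Ioi L).const_mul _)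
          ((ae_restrict_iff' measurableSet_Ioi).2 (Eventually.of_forall hΦ))
    _ = K := by
      rw [integral_const_mul, integral_exp_neg_Ioi, mul_assoc, ← Real.exp_add, add_neg_cancel,
        Real.exp_zero, mul_one]

lemma mk_exp_mem_sectorCusp {v : ℝ} (hv : v ∈ Ioc 0 L) :
    (Real.exp (v - L), Real.exp (-v - L)) ∈ sectorCusp :=
  ⟨Real.exp_pos _, Real.exp_lt_exp.2 (by linarith [hv.1]),
    Real.exp_le_one_iff.2 (by linarith [hv.2])⟩

lemma mk_exp_mem_sectorTail {v : ℝ} (hL : 1 ≤ L) (hv : L < v) :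
    (Real.exp (v - L), Real.exp (-v - L)) ∈ sectorTail := by
  have hhalf : Real.exp (-1) ≤ 1 / 2 := by
    rw [Real.exp_neg, inv_le_comm₀ (Real.exp_pos _) (by norm_num)]
    linarith [Real.add_one_le_exp 1]
  refine ⟨Real.exp_pos _, ?_, Real.one_le_exp (by linarith)⟩
  calc Real.exp (-v - L) ≤ Real.exp (-1) * Real.exp (-1) := by
        rw [← Real.exp_add]
        exact Real.exp_le_exp.2 (by linarith)
    _ ≤ 1 / 4 := by nlinarith [Real.exp_pos (-1)]

end

/-- `S` is close to the constant `R` in the cusp and decays in its tail, fast enough for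
`∫ S (t exp v, t exp (-v)) dv` over `v > 0` to grow like `R log (1 / t)` as `t → 0`. -/
structure HasConstantTerm (S : ℝ → ℝ → ℝ) (R : ℝ) : Prop where
  cusp : (fun p : ℝ × ℝ => S p.1 p.2 - R) =O[𝓟 sectorCusp] fun p => p.1 + p.2 / p.1
  tail : (fun p : ℝ × ℝ => S p.1 p.2) =O[𝓟 sectorTail] fun p => p.1⁻¹

namespace HasConstantTerm

variable {S T : ℝ → ℝ → ℝ} {R Q : ℝ}

lemma congr (hS : HasConstantTerm S R) (h : ∀ x y, 0 < y → y < x → T x y = S x y) :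
    HasConstantTerm T R where
  cusp := hS.cusp.congr' (eventually_principal.2 fun p hp => by simp only [h _ _ hp.1 hp.2.1]) .rfl
  tail := hS.tail.congr' (eventually_principal.2 fun p hp =>
    (h _ _ hp.1 (by linarith [hp.2.1, hp.2.2])).symm) .rfl

lemma sub (hS : HasConstantTerm S R) (hT : HasConstantTerm T Q) :
    HasConstantTerm (fun x y => S x y - T x y) (R - Q) where
  cusp := (hS.cusp.sub hT.cusp).congr_left fun p => by ring
  tail := hS.tail.sub hT.tail

lemma const_mul (hS : HasConstantTerm S R) (a : ℝ) :
    HasConstantTerm (fun x y => a * S x y) (a * R) where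
  cusp := (hS.cusp.const_mul_left a).congr_left fun _ => mul_sub _ _ _
  tail := hS.tail.const_mul_left a

lemma exists_abs_mul_le (hS : HasConstantTerm S R)
    (hint : ∀ t, 0 < t →
      IntegrableOn (fun v => S (t * Real.exp v) (t * Real.exp (-v))) (Ioi 0))
    (hzero : ∀ t, 0 < t → ∫ v in Ioi 0, S (t * Real.exp v) (t * Real.exp (-v)) = 0) :
    ∃ K, ∀ L, 1 ≤ L → |R * L| ≤ K := by
  obtain ⟨K₁, hK₁, hcusp⟩ := hS.cusp.exists_nonneg
  obtain ⟨K₂, htail⟩ := hS.tail.isBigOWith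
  refine ⟨2 * K₁ + K₂, fun L hL => ?_⟩
  have hL0 : 0 < L := one_pos.trans_le hL
  have hexp (v : ℝ) : Real.exp (-L) * Real.exp v = Real.exp (v - L) := by
    rw [← Real.exp_add, neg_add_eq_sub]
  have hint := hint _ (Real.exp_pos (-L))
  have hzero := hzero _ (Real.exp_pos (-L))
  simp only [hexp] at hint hzero
  have hbody := abs_integral_Ioc_sub_le (R := R) hK₁ hL0 (hint.mono_set Ioc_subset_Ioi_self)
    fun v hv => by
      refine (isBigOWith_principal.1 hcusp _ (mk_exp_mem_sectorCusp hv)).trans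
        (mul_le_mul_of_nonneg_left ?_ hK₁)
      rw [← Real.exp_sub, Real.norm_of_nonneg (by positivity)]
      gcongr
      linarith [hv.1]
  have hend := abs_integral_Ioi_le (K := K₂) (L := L)
    (Φ := fun v => S (Real.exp (v - L)) (Real.exp (-v - L))) fun v hv => by
      have hle := isBigOWith_principal.1 htail _ (mk_exp_mem_sectorTail hL hv)
      rwa [Real.norm_eq_abs, norm_inv, Real.norm_of_nonneg (Real.exp_nonneg _), ← Real.exp_neg,
        neg_sub] at hle
  rw [← Ioc_union_Ioi_eq_Ioi hL0.le, setIntegral_union Ioc_disjoint_Ioi_same measurableSet_Ioi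
    (hint.mono_set Ioc_subset_Ioi_self) (hint.mono_set (Ioi_subset_Ioi hL0.le))] at hzero
  rw [abs_le] at hbody hend ⊢
  constructor <;> linarith

theorem eq_zero (hS : HasConstantTerm S R)
    (hint : ∀ t, 0 < t →
      IntegrableOn (fun v => S (t * Real.exp v) (t * Real.exp (-v))) (Ioi 0))
    (hzero : ∀ t, 0 < t → ∫ v in Ioi 0, S (t * Real.exp v) (t * Real.exp (-v)) = 0) : R = 0 := by
  obtain ⟨K, hK⟩ := hS.exists_abs_mul_le hint hzero
  by_contra hR
  have hlarge := hK (max 1 ((K + 1) / |R|)) (le_max_left _ _)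
  rw [abs_mul, abs_of_pos (lt_max_of_lt_left one_pos)] at hlarge
  have := mul_le_mul_of_nonneg_left (le_max_right 1 ((K + 1) / |R|)) (abs_nonneg R)
  rw [mul_div_cancel₀ _ (abs_ne_zero.2 hR)] at this
  linarith

end HasConstantTerm

end ConstantTerm

section ProductConstantTerm

open Filter Asymptotics Matrix

variable {q r : ℕ} [NeZero q] [NeZero r]

lemma isBigO_rate_of_abs_le {h : ℝ × ℝ → ℝ} {K : ℝ} (hh : ∀ p ∈ sectorCusp, |h p| ≤ K * p.1) :
    h =O[𝓟 sectorCusp] fun p => p.1 + p.2 / p.1 :=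
  isBigO_principal.2 ⟨K, fun p hp => (hh p hp).trans <| by
    have hy := hp.1
    have hx : 0 < p.1 := hp.1.trans hp.2.1
    have hK : 0 ≤ K := nonneg_of_mul_nonneg_left ((abs_nonneg _).trans (hh p hp)) hx
    rw [Real.norm_of_nonneg (by positivity)]
    exact mul_le_mul_of_nonneg_left (le_add_of_nonneg_right (by positivity)) hK⟩

lemma isBigO_fst_rate :
    (fun p : ℝ × ℝ => p.1) =O[𝓟 sectorCusp] fun p => p.1 + p.2 / p.1 :=
  isBigO_rate_of_abs_le (K := 1) fun p hp => by
    rw [one_mul, abs_of_pos (hp.1.trans hp.2.1)]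

lemma isBigO_snd_rate :
    (fun p : ℝ × ℝ => p.2) =O[𝓟 sectorCusp] fun p => p.1 + p.2 / p.1 :=
  isBigO_rate_of_abs_le (K := 1) fun p hp => by
    rw [one_mul, abs_of_pos hp.1]
    exact hp.2.1.le

lemma abs_fst_le_one {p : ℝ × ℝ} (hp : p ∈ sectorCusp) : |p.1| ≤ 1 := by
  rw [abs_of_pos (hp.1.trans hp.2.1)]
  exact hp.2.2

lemma abs_snd_le_one {p : ℝ × ℝ} (hp : p ∈ sectorCusp) : |p.2| ≤ 1 := by
  rw [abs_of_pos hp.1]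
  exact hp.2.1.le.trans hp.2.2

lemma progSeries_dotProduct_mulVec_progSeries {c : Matrix (ZMod q) (ZMod r) ℝ} (hrow : c *ᵥ 1 = 0)
    (hcol : 1 ᵥ* c = 0) {x y : ℝ} (hx : 0 < x) (hy : 0 < y) :
    progSeries q x ⬝ᵥ c *ᵥ progSeries r y = progReg q x ⬝ᵥ c *ᵥ progReg r y := by
  rw [progSeries_eq_add hx, progSeries_eq_add hy, mulVec_add, mulVec_smul, hrow, smul_zero,
    add_zero, add_dotProduct, smul_dotProduct, dotProduct_mulVec 1, hcol, zero_dotProduct,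
    smul_zero, add_zero]

lemma hasConstantTerm_progReg {c : Matrix (ZMod q) (ZMod r) ℝ} (hrow : ∀ k, c 0 k = 0)
    (hcol : ∀ a, c a 0 = 0) :
    HasConstantTerm
      (fun x y => progReg q x ⬝ᵥ c *ᵥ progReg r y + progReg q y ⬝ᵥ c *ᵥ progReg r x)
      (2 * (progReg q 0 ⬝ᵥ c *ᵥ progReg r 0)) where
  cusp := by
    have hxy := isBigO_dotProduct_mulVec_sub (c := c) (contDiff_progReg (q := q))
      (contDiff_progReg (q := r)) (fun _ => abs_fst_le_one) (fun _ => abs_snd_le_one)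
      isBigO_fst_rate isBigO_snd_rate
    have hyx := isBigO_dotProduct_mulVec_sub (c := c) (contDiff_progReg (q := q))
      (contDiff_progReg (q := r)) (fun _ => abs_snd_le_one) (fun _ => abs_fst_le_one)
      isBigO_snd_rate isBigO_fst_rate
    exact (hxy.add hyx).congr_left fun p => by ring
  tail := by
    have hpos : ∀ p ∈ sectorTail, 0 < p.1 := fun p hp => one_pos.trans_le hp.2.2
    refine (isBigO_dotProduct_mulVec fun a k hak => ?_).add
      (isBigO_dotProduct_mulVec fun a k hak => ?_)
    · have ha : a ≠ 0 := by rintro rfl; exact hak (hrow k)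
      simpa using (isBigO_progReg_inv hpos ha).mul (isBigO_progReg_one (fun p => p.2) k)
    · have hk : k ≠ 0 := by rintro rfl; exact hak (hcol a)
      simpa using (isBigO_progReg_one (fun p => p.2) a).mul (isBigO_progReg_inv hpos hk)

variable {D : ℕ} {f : ZMod q → ℝ} {χ : ZMod D → ℝ}

lemma productMatrix_mulVec_one [NeZero D] (hf : f.Odd) (hχ : χ.Even) :
    productMatrix f χ *ᵥ 1 = 0 := by
  ext a
  have hodd : Function.Odd (productMatrix f χ a) := fun k => by
    simp only [productMatrix, of_apply, map_neg, mul_neg, hf _, hχ _, neg_mul]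
  simpa [mulVec, dotProduct] using hodd.sum_eq_zero

lemma one_vecMul_productMatrix (hf : f.Odd) : 1 ᵥ* productMatrix f χ = 0 := by
  ext k
  have hodd : Function.Odd fun a => productMatrix f χ a k := fun a => by
    simp only [productMatrix, of_apply, neg_mul, hf _]
  simpa [vecMul, dotProduct] using hodd.sum_eq_zero

lemma hasConstantTerm_productSeries [NeZero D] (hf : f.Odd) (hχ : χ.Even) :
    HasConstantTerm
      (fun x y => productSeries (fun N => f N) (fun k => χ k) x y +
        productSeries (fun N => f N) (fun k => χ k) y x)
      (2 * (progReg q 0 ⬝ᵥ productMatrix f χ *ᵥ progReg (q * D) 0)) := by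
  refine (hasConstantTerm_progReg (c := productMatrix f χ) (fun k => ?_) fun a => ?_).congr
    fun x y hy hyx => ?_
  · simp [productMatrix, hf.map_zero]
  · simp [productMatrix, hf.map_zero]
  · have hrow := productMatrix_mulVec_one hf hχ
    have hcol := one_vecMul_productMatrix (χ := χ) hf
    rw [productSeries_eq_dotProduct f χ (hy.trans hyx) hy,
      productSeries_eq_dotProduct f χ hy (hy.trans hyx),
      progSeries_dotProduct_mulVec_progSeries hrow hcol (hy.trans hyx) hy,
      progSeries_dotProduct_mulVec_progSeries hrow hcol hy (hy.trans hyx)]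

end ProductConstantTerm

section ConeConstantTerm

open Filter Asymptotics Matrix

variable {q : ℕ} [NeZero q] {g : Matrix (ZMod q) (ZMod q) ℝ}

lemma progSeries_dotProduct_mulVec_halfSeries (hg : 1 ⬝ᵥ g *ᵥ 1 = 0) {z w : ℝ} (hz : 0 < z)
    (hw : 0 < w) :
    progSeries q z ⬝ᵥ g *ᵥ halfSeries q w =
      progReg q z ⬝ᵥ g *ᵥ halfReg q w + progPole q w * (progReg q z ⬝ᵥ g *ᵥ 1) +
        progPole q z * (1 ⬝ᵥ g *ᵥ halfReg q w) := by
  rw [progSeries_eq_add hz, halfSeries_eq_add hw, mulVec_add, mulVec_smul, add_dotProduct,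
    dotProduct_add, dotProduct_add, dotProduct_smul, smul_dotProduct, smul_dotProduct,
    dotProduct_smul, hg]
  simp only [smul_eq_mul]
  ring

lemma deriv_dotProduct_mulVec_halfReg :
    deriv (fun w => 1 ⬝ᵥ g *ᵥ halfReg q w) 0 = 1 ⬝ᵥ g *ᵥ progDeriv q := by
  have hhalf : HasDerivAt (halfReg q) (progDeriv q) 0 := hasDerivAt_progReg_zero.sub_const _
  exact (HasDerivAt.fun_sum fun a _ => (HasDerivAt.fun_sum fun b _ =>
    (hasDerivAt_pi.1 hhalf b).const_mul (g a b)).const_mul 1).deriv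

lemma deriv_progReg_dotProduct_mulVec_one :
    deriv (fun z => progReg q z ⬝ᵥ g *ᵥ 1) 0 = progDeriv q ⬝ᵥ g *ᵥ 1 :=
  (HasDerivAt.fun_sum fun a _ =>
    (hasDerivAt_pi.1 hasDerivAt_progReg_zero a).mul_const ((g *ᵥ 1) a)).deriv

section

variable {α β : ℝ}

lemma le_linearForm (hβ : 0 < β) {p : ℝ × ℝ} (hp : 0 < p.2) : α * p.1 ≤ α * p.1 + β * p.2 :=
  le_add_of_nonneg_right (mul_pos hβ hp).le

lemma linearForm_pos (hα : 0 < α) (hβ : 0 < β) {p : ℝ × ℝ} (hx : 0 < p.1) (hy : 0 < p.2) :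
    0 < α * p.1 + β * p.2 := by positivity

lemma abs_linearForm_le_mul_fst (hα : 0 < α) (hβ : 0 < β) {p : ℝ × ℝ} (hp : p ∈ sectorCusp) :
    |α * p.1 + β * p.2| ≤ (α + β) * p.1 := by
  rw [abs_of_pos (linearForm_pos hα hβ (hp.1.trans hp.2.1) hp.1), add_mul]
  gcongr
  exact hp.2.1.le

lemma abs_linearForm_le (hα : 0 < α) (hβ : 0 < β) {p : ℝ × ℝ} (hp : p ∈ sectorCusp) :
    |α * p.1 + β * p.2| ≤ α + β + 1 := by
  nlinarith [abs_linearForm_le_mul_fst hα hβ hp, hp.2.2]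

lemma abs_fst_sub_snd_le {p : ℝ × ℝ} (hp : p ∈ sectorCusp) : |p.1 - p.2| ≤ p.1 := by
  rw [abs_of_pos (sub_pos.2 hp.2.1)]
  exact sub_le_self _ hp.1.le

lemma isBigO_fst_sub_snd_rate :
    (fun p : ℝ × ℝ => p.1 - p.2) =O[𝓟 sectorCusp] fun p => p.1 + p.2 / p.1 :=
  isBigO_rate_of_abs_le (K := 1) fun p hp => by simpa using abs_fst_sub_snd_le hp

lemma isBigO_linearForm_rate (hα : 0 < α) (hβ : 0 < β) :
    (fun p : ℝ × ℝ => α * p.1 + β * p.2) =O[𝓟 sectorCusp] fun p => p.1 + p.2 / p.1 :=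
  isBigO_rate_of_abs_le fun _ => abs_linearForm_le_mul_fst hα hβ

lemma isBigO_fst_sub_snd_linearForm (hα : 0 < α) (hβ : 0 < β) :
    (fun p : ℝ × ℝ => p.1 - p.2) =O[𝓟 sectorCusp] fun p => α * p.1 + β * p.2 :=
  isBigO_principal.2 ⟨α⁻¹, fun p hp => by
    rw [Real.norm_of_nonneg (linearForm_pos hα hβ (hp.1.trans hp.2.1) hp.1).le,
      le_inv_mul_iff₀ hα]
    exact (mul_le_mul_of_nonneg_left (abs_fst_sub_snd_le hp) hα.le).trans (le_linearForm hβ hp.1)⟩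

-- The two sides differ by `(1 + β / α) y / (α x + β y)`.
lemma isBigO_div_linearForm_sub (hα : 0 < α) (hβ : 0 < β) :
    (fun p : ℝ × ℝ => (p.1 - p.2) / (α * p.1 + β * p.2) - α⁻¹) =O[𝓟 sectorCusp]
      fun p => p.1 + p.2 / p.1 :=
  isBigO_principal.2 ⟨(1 + β / α) / α, fun p hp => by
    obtain ⟨hy, hyx, -⟩ := hp
    have hx := hy.trans hyx
    have := linearForm_pos hα hβ hx hy
    have hdiff : (p.1 - p.2) / (α * p.1 + β * p.2) - α⁻¹ =
        -((1 + β / α) * p.2 / (α * p.1 + β * p.2)) := by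
      field_simp
      ring
    rw [hdiff, norm_neg, Real.norm_of_nonneg (by positivity), Real.norm_of_nonneg (by positivity)]
    calc (1 + β / α) * p.2 / (α * p.1 + β * p.2) ≤ (1 + β / α) * p.2 / (α * p.1) :=
          div_le_div_of_nonneg_left (by positivity) (by positivity) (le_linearForm hβ hy)
      _ = (1 + β / α) / α * (p.2 / p.1) := mul_div_mul_comm _ _ _ _
      _ ≤ (1 + β / α) / α * (p.1 + p.2 / p.1) := by
        gcongr
        exact le_add_of_nonneg_left hx.le⟩

lemma isBigO_progPole_mul_one_dotProduct (hg : 1 ⬝ᵥ g *ᵥ halfReg q 0 = 0) (hα : 0 < α)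
    (hβ : 0 < β) :
    (fun p : ℝ × ℝ => progPole q (α * p.1 + β * p.2) * (1 ⬝ᵥ g *ᵥ halfReg q (p.1 - p.2)) -
      (1 ⬝ᵥ g *ᵥ progDeriv q) / q * α⁻¹) =O[𝓟 sectorCusp] fun p => p.1 + p.2 / p.1 := by
  set e := 1 ⬝ᵥ g *ᵥ progDeriv q
  have hφ : ContDiff ℝ 2 fun w => 1 ⬝ᵥ g *ᵥ halfReg q w :=
    contDiff_dotProduct_mulVec contDiff_const contDiff_halfReg
  have htaylor := isBigO_sub_sub_deriv_zero_mul hφ (u := fun p : ℝ × ℝ => p.1 - p.2)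
    (v := fun _ => 0) (s := sectorCusp) (M := 1)
    (fun p hp => (abs_fst_sub_snd_le hp).trans hp.2.2) (by simp)
  rw [deriv_dotProduct_mulVec_halfReg] at htaylor
  simp only [hg, sub_zero, abs_zero, add_zero] at htaylor
  have hquad : (fun p : ℝ × ℝ => |p.1 - p.2| * (p.1 - p.2)) =O[𝓟 sectorCusp]
      fun p => (α * p.1 + β * p.2) * (p.1 + p.2 / p.1) :=
    (isBigO_fst_sub_snd_linearForm hα hβ).abs_left.mul isBigO_fst_sub_snd_rate
  have hpole := isBigO_progPole_mul_sub (q := q)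
    (fun p hp => linearForm_pos hα hβ (hp.1.trans hp.2.1) hp.1) (htaylor.trans hquad)
    (isBigO_fst_sub_snd_rate.const_mul_left e)
  refine (hpole.add ((isBigO_div_linearForm_sub hα hβ).const_mul_left (e / q))).congr_left
    fun p => ?_
  rw [mul_div_mul_comm]
  ring

lemma isBigO_progPole_mul_sub_dotProduct_one {n : ℝ} {α' β' : ℝ} (hα : 0 < α) (hβ : 0 < β)
    (hα' : 0 < α') (hβ' : 0 < β')
    (hn : ∀ x y : ℝ, α' * x + β' * y = α * x + β * y + n * (x - y)) :
    (fun p : ℝ × ℝ => progPole q (p.1 - p.2) * (progReg q (α * p.1 + β * p.2) ⬝ᵥ g *ᵥ 1 -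
      progReg q (α' * p.1 + β' * p.2) ⬝ᵥ g *ᵥ 1) + n / q * (progDeriv q ⬝ᵥ g *ᵥ 1))
      =O[𝓟 sectorCusp] fun p => p.1 + p.2 / p.1 := by
  have hφ : ContDiff ℝ 2 fun z => progReg q z ⬝ᵥ g *ᵥ 1 :=
    contDiff_dotProduct_mulVec contDiff_progReg contDiff_const
  have := add_pos hα hβ
  have := add_pos hα' hβ'
  have htaylor := isBigO_sub_sub_deriv_zero_mul hφ (M := α + β + 1 + (α' + β' + 1))
    (fun p hp => (abs_linearForm_le hα hβ hp).trans (by linarith))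
    (fun p hp => (abs_linearForm_le hα' hβ' hp).trans (by linarith))
  rw [deriv_progReg_dotProduct_mulVec_one] at htaylor
  have hsub (p : ℝ × ℝ) : α * p.1 + β * p.2 - (α' * p.1 + β' * p.2) = -n * (p.1 - p.2) := by
    rw [hn]
    ring
  simp only [hsub] at htaylor
  have hquad : (fun p : ℝ × ℝ => (|α * p.1 + β * p.2| + |α' * p.1 + β' * p.2|) *
      (-n * (p.1 - p.2))) =O[𝓟 sectorCusp] fun p => (p.1 - p.2) * (p.1 + p.2 / p.1) :=
    (((isBigO_linearForm_rate hα hβ).abs_left.add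
      (isBigO_linearForm_rate hα' hβ').abs_left).mul ((isBigO_refl _ _).const_mul_left (-n))).congr
      (fun _ => rfl) fun _ => mul_comm _ _
  refine (isBigO_progPole_mul_sub (q := q) (fun p hp => sub_pos.2 hp.2.1) (htaylor.trans hquad)
    ((isBigO_fst_sub_snd_rate.const_mul_left (-n)).const_mul_left _)).congr'
      (Filter.eventually_principal.2 fun p hp => ?_) .rfl
  have hw : p.1 - p.2 ≠ 0 := (sub_pos.2 hp.2.1).ne'
  have hq : (q : ℝ) ≠ 0 := NeZero.ne _
  field_simp
  ring

lemma isBigO_tail_progSeries_halfSeries (hg : g 0 0 = 0) (hα : 0 < α) (hβ : 0 < β) :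
    (fun p : ℝ × ℝ => progSeries q (α * p.1 + β * p.2) ⬝ᵥ g *ᵥ halfSeries q (p.1 - p.2))
      =O[𝓟 sectorTail] fun p => p.1⁻¹ := by
  have hfst : (fun p : ℝ × ℝ => p.1⁻¹) =O[𝓟 sectorTail] fun _ => (1 : ℝ) :=
    isBigO_principal.2 ⟨1, fun p hp => by
      rw [Real.norm_of_nonneg (inv_nonneg.2 (one_pos.trans_le hp.2.2).le), norm_one, one_mul]
      exact inv_le_one_of_one_le₀ hp.2.2⟩
  have hzpos (p : ℝ × ℝ) (hp : p ∈ sectorTail) : 0 < α * p.1 + β * p.2 :=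
    linearForm_pos hα hβ (one_pos.trans_le hp.2.2) hp.1
  have hwpos (p : ℝ × ℝ) (hp : p ∈ sectorTail) : 0 < p.1 - p.2 := by linarith [hp.2.1, hp.2.2]
  have hz : (fun p : ℝ × ℝ => (α * p.1 + β * p.2)⁻¹) =O[𝓟 sectorTail] fun p => p.1⁻¹ :=
    (isBigO_principal.2 ⟨α⁻¹, fun p hp => by
      have hx : 0 < p.1 := one_pos.trans_le hp.2.2
      rw [Real.norm_of_nonneg hx.le, Real.norm_of_nonneg (hzpos p hp).le, le_inv_mul_iff₀ hα]
      exact le_linearForm hβ hp.1⟩ : (fun p : ℝ × ℝ => p.1) =O[𝓟 sectorTail] _).inv_rev <|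
      Filter.eventually_principal.2 fun p hp h => absurd h (one_pos.trans_le hp.2.2).ne'
  have hw : (fun p : ℝ × ℝ => (p.1 - p.2)⁻¹) =O[𝓟 sectorTail] fun p => p.1⁻¹ :=
    (isBigO_principal.2 ⟨2, fun p hp => by
      rw [Real.norm_of_nonneg (one_pos.trans_le hp.2.2).le, Real.norm_of_nonneg (hwpos p hp).le]
      linarith [hp.2.1, hp.2.2]⟩ : (fun p : ℝ × ℝ => p.1) =O[𝓟 sectorTail] _).inv_rev <|
      Filter.eventually_principal.2 fun p hp h => absurd h (one_pos.trans_le hp.2.2).ne'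
  refine isBigO_dotProduct_mulVec fun a b hab => ?_
  by_cases ha : a = 0
  · have hb : b ≠ 0 := by
      rintro rfl
      exact hab (ha ▸ hg)
    simpa using (isBigO_progSeries_one hzpos (hz.trans hfst) a).mul
      ((isBigO_halfSeries_inv hwpos hb).trans hw)
  · simpa using ((isBigO_progSeries_inv hzpos ha).trans hz).mul
      (isBigO_halfSeries_one hwpos (hw.trans hfst) b)

end

section

variable (n : ZMod q) {f : ZMod q → ℝ}

lemma normForm_neg_left {R : Type*} [CommRing R] (n a b : R) :
    normForm (-n) a b = normForm n a (-b) := by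
  unfold normForm
  ring

lemma normForm_neg_neg {R : Type*} [CommRing R] (n a b : R) :
    normForm n (-a) (-b) = normForm n a b := by
  unfold normForm
  ring

lemma normForm_neg_swap {R : Type*} [CommRing R] (n a b : R) :
    normForm n (-b) a = -normForm n a b := by
  unfold normForm
  ring

lemma normMatrix_neg_mulVec (u : ZMod q → ℝ) :
    normMatrix (-n) f *ᵥ u = normMatrix n f *ᵥ fun b => u (-b) := by
  ext a
  simp only [normMatrix, mulVec, dotProduct, of_apply, normForm_neg_left]
  exact Fintype.sum_equiv (.neg _) _ _ fun b => by simp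

lemma one_dotProduct_normMatrix_mulVec_one (hf : f.Odd) : 1 ⬝ᵥ normMatrix n f *ᵥ 1 = 0 := by
  have hsum : ∑ a, ∑ b, f (normForm n a b) = -∑ a, ∑ b, f (normForm n a b) := by
    calc ∑ a, ∑ b, f (normForm n a b) = ∑ b, ∑ a, f (normForm n a b) := Finset.sum_comm
      _ = ∑ b, ∑ a, f (normForm n (-a) b) :=
        Finset.sum_congr rfl fun b _ => Fintype.sum_equiv (.neg _) _ _ fun a => by simp
      _ = -∑ a, ∑ b, f (normForm n a b) := by
        simp only [normForm_neg_swap, hf _, Finset.sum_neg_distrib]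
  simpa [normMatrix, mulVec, dotProduct] using self_eq_neg.1 hsum

lemma one_dotProduct_normMatrix_mulVec_neg (u : ZMod q → ℝ) :
    (1 ⬝ᵥ normMatrix n f *ᵥ fun b => u (-b)) = 1 ⬝ᵥ normMatrix n f *ᵥ u := by
  simp only [dotProduct_mulVec]
  have heven (b : ZMod q) : (1 ᵥ* normMatrix n f) (-b) = (1 ᵥ* normMatrix n f) b :=
    Fintype.sum_equiv (.neg _) _ _ fun a => by simp [normMatrix, ← normForm_neg_neg n a]
  exact Fintype.sum_equiv (.neg _) _ _ fun b => by simp [heven]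

lemma one_dotProduct_normMatrix_neg_mulVec (u : ZMod q → ℝ) :
    1 ⬝ᵥ normMatrix (-n) f *ᵥ u = 1 ⬝ᵥ normMatrix n f *ᵥ u := by
  rw [normMatrix_neg_mulVec, one_dotProduct_normMatrix_mulVec_neg]

lemma halfReg_zero_neg (b : ZMod q) : halfReg q 0 (-b) = 1 - halfReg q 0 b := by
  have hq : (q : ℝ) ≠ 0 := NeZero.ne _
  simp only [halfReg, Pi.sub_apply, progReg_zero, Pi.single_apply, neg_eq_zero]
  by_cases hb : b = 0
  · norm_num [hb]
  · simp only [ZMod.neg_val, hb, if_false, Nat.cast_sub b.val_lt.le]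
    field_simp
    ring

lemma normMatrix_neg_mulVec_halfReg :
    normMatrix (-n) f *ᵥ halfReg q 0 = normMatrix n f *ᵥ 1 - normMatrix n f *ᵥ halfReg q 0 := by
  rw [normMatrix_neg_mulVec, ← mulVec_sub]
  congr 1
  ext b
  exact halfReg_zero_neg b

lemma one_dotProduct_normMatrix_mulVec_halfReg (hf : f.Odd) :
    1 ⬝ᵥ normMatrix n f *ᵥ halfReg q 0 = 0 := by
  refine self_eq_neg.1 ?_
  conv_lhs => rw [← one_dotProduct_normMatrix_mulVec_neg, ← normMatrix_neg_mulVec,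
    normMatrix_neg_mulVec_halfReg, dotProduct_sub, one_dotProduct_normMatrix_mulVec_one n hf,
    zero_sub]

end

lemma coneDual_eq (n : ℕ) (x y : ℝ) :
    coneDual n x y = (fundUnit n)⁻¹ * x + fundUnit n * y := by
  rw [coneDual, div_eq_inv_mul]

lemma coneDual_swap_eq (n : ℕ) (x y : ℝ) :
    coneDual n y x = fundUnit n * x + (fundUnit n)⁻¹ * y := by
  rw [coneDual_eq, add_comm]

/-- Half the constant term of `coneSeries n f x y + coneSeries n f y x`. -/
def coneConstant (n : ℕ) (f : ZMod q → ℝ) : ℝ :=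
  progReg q 0 ⬝ᵥ normMatrix n f *ᵥ (2 • halfReg q 0 - 1) +
    n / q * (1 ⬝ᵥ normMatrix n f *ᵥ progDeriv q - progDeriv q ⬝ᵥ normMatrix n f *ᵥ 1)

lemma isBigO_cusp_coneSeries (n : ℕ) {f : ZMod q → ℝ} (hf : f.Odd) :
    (fun p : ℝ × ℝ => progSeries q (coneDual n p.1 p.2) ⬝ᵥ normMatrix n f *ᵥ
        halfSeries q (p.1 - p.2) -
      progSeries q (coneDual n p.2 p.1) ⬝ᵥ normMatrix (-n) f *ᵥ halfSeries q (p.1 - p.2) -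
        coneConstant n f) =O[𝓟 sectorCusp] fun p => p.1 + p.2 / p.1 := by
  have hε := fundUnit_pos n
  have hε' := inv_pos.2 hε
  have hone : normMatrix (-n : ZMod q) f *ᵥ 1 = normMatrix n f *ᵥ 1 := normMatrix_neg_mulVec _ _
  have htotal (m : ZMod q) := one_dotProduct_normMatrix_mulVec_one m hf
  have hhalf (m : ZMod q) := one_dotProduct_normMatrix_mulVec_halfReg m hf
  have hreg (m : ZMod q) {α β : ℝ} (hα : 0 < α) (hβ : 0 < β) :=
    isBigO_dotProduct_mulVec_sub (c := normMatrix m f) (contDiff_progReg (q := q))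
      (contDiff_halfReg (q := q)) (fun _ => abs_linearForm_le hα hβ)
      (fun _ hp => ((abs_fst_sub_snd_le hp).trans hp.2.2).trans (by linarith))
      (isBigO_linearForm_rate hα hβ) isBigO_fst_sub_snd_rate
  have hpole := isBigO_progPole_mul_sub_dotProduct_one (g := normMatrix (n : ZMod q) f)
    hε' hε hε hε' fun x y => by
    rw [← coneDual_swap_eq, ← coneDual_eq, coneDual_swap]
  refine (((hreg n hε' hε).sub (hreg (-n) hε hε')).add hpole |>.add
    ((isBigO_progPole_mul_one_dotProduct (hhalf n) hε' hε).sub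
      (isBigO_progPole_mul_one_dotProduct (hhalf (-n)) hε hε'))).congr'
    (Filter.eventually_principal.2 fun p hp => ?_) .rfl
  have hx : 0 < p.1 := hp.1.trans hp.2.1
  beta_reduce
  rw [progSeries_dotProduct_mulVec_halfSeries (htotal n) (coneDual_pos n hx hp.1)
      (sub_pos.2 hp.2.1), progSeries_dotProduct_mulVec_halfSeries (htotal (-n))
      (coneDual_pos n hp.1 hx) (sub_pos.2 hp.2.1), coneDual_eq n p.1 p.2,
    coneDual_swap_eq, hone, one_dotProduct_normMatrix_neg_mulVec _ (progDeriv q),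
    normMatrix_neg_mulVec_halfReg, coneConstant, inv_inv, inv_fundUnit]
  simp only [two_nsmul, mulVec_sub, mulVec_add, dotProduct_sub, dotProduct_add]
  ring

lemma hasConstantTerm_coneSeries (n : ℕ) {f : ZMod q → ℝ} (hf : f.Odd) :
    HasConstantTerm
      (fun x y => coneSeries n (fun N => f N) x y + coneSeries n (fun N => f N) y x)
      (2 * coneConstant n f) := by
  have hε := fundUnit_pos n
  have hε' := inv_pos.2 hε
  have hzero (m : ZMod q) : normMatrix m f 0 0 = 0 := by
    simp [normMatrix, normForm, hf.map_zero]
  refine HasConstantTerm.congr (S := fun x y => 2 *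
    (progSeries q (coneDual n x y) ⬝ᵥ normMatrix n f *ᵥ halfSeries q (x - y) -
      progSeries q (coneDual n y x) ⬝ᵥ normMatrix (-n) f *ᵥ halfSeries q (x - y)))
    (HasConstantTerm.const_mul ⟨isBigO_cusp_coneSeries n hf, ?_⟩ 2) fun x y hy hyx =>
      (coneSeries_add_swap f hy hyx)
  refine ((isBigO_tail_progSeries_halfSeries (hzero n) hε' hε).sub
    (isBigO_tail_progSeries_halfSeries (hzero (-n)) hε hε')).congr_left fun p => ?_
  rw [coneDual_eq n p.1 p.2, coneDual_swap_eq]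

end ConeConstantTerm

section FiniteIdentity

open MeasureTheory Set Matrix

lemma integrableOn_Ioi_add_comp_neg {h : ℝ → ℝ} (hh : Integrable h) :
    IntegrableOn (fun v => h v + h (-v)) (Ioi 0) :=
  (hh.add hh.comp_neg).integrableOn

lemma integral_Ioi_add_comp_neg {h : ℝ → ℝ} (hh : Integrable h) :
    ∫ v in Ioi 0, (h v + h (-v)) = ∫ v, h v := by
  rw [integral_add hh.integrableOn hh.comp_neg.integrableOn, integral_comp_neg_Ioi, neg_zero,
    add_comm, intervalIntegral.integral_Iic_add_Ioi hh.integrableOn hh.integrableOn]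

/-- The weight of the pair of residues `(a, b)` modulo `q` in Biró's identity for the order of
discriminant `n ^ 2 + 4`, over any ring. -/
def coneWeight {q : ℕ} {R : Type*} [CommRing R] (n : R) (a b : ZMod q) : R :=
  (if b = 0 then 0 else 2 * ((q : R) - a.val) * (q - 2 * b.val)) +
    n * ((b.val : R) ^ 2 - q * b.val - a.val ^ 2 + q * a.val)

lemma map_coneWeight {q : ℕ} {R S : Type*} [CommRing R] [CommRing S] (φ : R →+* S) (n : R)
    (a b : ZMod q) : φ (coneWeight n a b) = coneWeight (φ n) a b := by
  simp only [coneWeight, apply_ite φ, map_add, map_sub, map_mul, map_pow, map_natCast, map_ofNat,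
    map_zero]

variable {n q D : ℕ} [NeZero q] [NeZero D]

theorem progReg_dotProduct_productMatrix_eq_coneConstant {f : ZMod q → ℝ} {χ : ZMod D → ℝ}
    (hf : f.Odd) (hχ : χ.Even) (hχ1 : ∀ k, |χ k| ≤ 1) (hcount : CountsConePoints n fun k => χ k) :
    progReg q 0 ⬝ᵥ productMatrix f χ *ᵥ progReg (q * D) 0 = coneConstant n f := by
  obtain ⟨H, hH⟩ := exists_abs_natCast_le f
  have hf0 : f (0 : ℕ) = 0 := by rw [Nat.cast_zero, hf.map_zero]
  have hχ' (k : ℕ) : |χ k| ≤ 1 := hχ1 k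
  have hconst := (hasConstantTerm_productSeries hf hχ).sub (hasConstantTerm_coneSeries n hf)
  have hprod {t : ℝ} (ht : 0 < t) := (integrable_productSeries_and_integral hH hf0 hχ' ht).1
  have hcone {t : ℝ} (ht : 0 < t) := (integrable_coneSeries_and_integral (n := n) hH hf0 ht).1
  have hprodIoi {t : ℝ} (ht : 0 < t) := integrableOn_Ioi_add_comp_neg (hprod ht)
  have hconeIoi {t : ℝ} (ht : 0 < t) := integrableOn_Ioi_add_comp_neg (hcone ht)
  have hprodInt {t : ℝ} (ht : 0 < t) := integral_Ioi_add_comp_neg (hprod ht)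
  have hconeInt {t : ℝ} (ht : 0 < t) := integral_Ioi_add_comp_neg (hcone ht)
  simp only [neg_neg] at hprodIoi hconeIoi hprodInt hconeInt
  have hzero := hconst.eq_zero (fun t ht => (hprodIoi ht).sub (hconeIoi ht)) fun t ht => by
    rw [integral_sub (hprodIoi ht) (hconeIoi ht), hprodInt ht, hconeInt ht,
      integral_productSeries_eq_integral_coneSeries hH hf0 hχ' hcount ht, sub_self]
  linarith

lemma coneConstant_eq_sum (f : ZMod q → ℝ) :
    2 * q ^ 2 * coneConstant n f =
      ∑ a, ∑ b, f (normForm (n : ZMod q) a b) * coneWeight (n : ℝ) a b := by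
  have hq : (q : ℝ) ≠ 0 := NeZero.ne _
  simp only [coneConstant, dotProduct, mulVec, Finset.mul_sum, ← Finset.sum_add_distrib,
    ← Finset.sum_sub_distrib]
  refine Finset.sum_congr rfl fun a _ => Finset.sum_congr rfl fun b _ => ?_
  simp only [normMatrix, of_apply, Pi.one_apply, Pi.sub_apply, Pi.smul_apply, halfReg, progReg_zero,
    Pi.single_apply, progDeriv, coneWeight]
  simp only [nsmul_eq_mul]
  by_cases hb : b = 0
  · simp only [hb, if_true, ZMod.val_zero]
    push_cast
    field_simp
    ring
  · simp only [hb, if_false]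
    push_cast
    field_simp
    ring

lemma progReg_dotProduct_productMatrix_eq_sum (f : ZMod q → ℝ) (χ : ZMod D → ℝ) :
    q ^ 2 * D * (progReg q 0 ⬝ᵥ productMatrix f χ *ᵥ progReg (q * D) 0) =
      ∑ a, ∑ k, productMatrix f χ a k * ((q - a.val) * (q * D - k.val)) := by
  have hq : (q : ℝ) ≠ 0 := NeZero.ne _
  have hD : (D : ℝ) ≠ 0 := NeZero.ne _
  simp only [dotProduct, mulVec, Finset.mul_sum, progReg_zero]
  refine Finset.sum_congr rfl fun a _ => Finset.sum_congr rfl fun k _ => ?_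
  push_cast
  field_simp

theorem sum_mul_eq_sum_normForm_mul_coneWeight {f : ZMod q → ℤ} {χ : ZMod D → ℤ}
    (hf : f.Odd) (hχ : χ.Even) (hχ1 : ∀ k, |χ k| ≤ 1) (hcount : CountsConePoints n fun k => χ k) :
    2 * ∑ a, ∑ k : ZMod (q * D), f (a * ZMod.castHom (dvd_mul_right q D) _ k) *
        χ (ZMod.castHom (dvd_mul_left D q) _ k) * ((q - a.val) * (q * D - k.val)) =
      D * ∑ a, ∑ b, f (normForm (n : ZMod q) a b) * coneWeight (n : ℤ) a b := by
  have hidentity := progReg_dotProduct_productMatrix_eq_coneConstant (n := n)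
    (f := fun b => (f b : ℝ)) (χ := fun k => (χ k : ℝ)) (fun b => by simp only [hf b, Int.cast_neg])
    (fun k => by simp only [hχ k]) (fun k => mod_cast hχ1 k) hcount
  have hcone := coneConstant_eq_sum (n := n) fun b => (f b : ℝ)
  have hprod := progReg_dotProduct_productMatrix_eq_sum (fun b => (f b : ℝ)) fun k => (χ k : ℝ)
  simp only [productMatrix, of_apply] at hprod hidentity
  have hreal : (2 * ∑ a, ∑ k : ZMod (q * D), (f (a * ZMod.castHom (dvd_mul_right q D) _ k) : ℝ) *
        χ (ZMod.castHom (dvd_mul_left D q) _ k) * ((q - a.val) * (q * D - k.val)) : ℝ) =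
      D * ∑ a, ∑ b, (f (normForm (n : ZMod q) a b) : ℝ) * coneWeight (n : ℝ) a b := by
    rw [← hcone, ← hprod, hidentity]
    ring
  have hweight (a b : ZMod q) : coneWeight (n : ℝ) a b = (coneWeight (n : ℤ) a b : ℤ) := by
    simpa using (map_coneWeight (Int.castRingHom ℝ) (n : ℤ) a b).symm
  simp only [hweight] at hreal
  exact_mod_cast hreal

end FiniteIdentity

section BiroCongruence

/-- The sum over pairs of residues modulo `q` of a multiplicative function `ψ` of the norm form of
parameter `m` modulo `q`, weighted by the cone weight of parameter `s` modulo `r`. Biró's congruence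
says that it vanishes when `m` and `s` are the residues of the same `n`. -/
def biroSum {q r : ℕ} [NeZero q] (ψ : ZMod q →* ZMod r) (m : ZMod q) (s : ZMod r) : ZMod r :=
  ∑ a, ∑ b, ψ (normForm m a b) * coneWeight s a b

variable {q r : ℕ}

lemma valMinAbs_neg_of_odd (hr : Odd r) (a : ZMod r) : (-a).valMinAbs = -a.valMinAbs :=
  ZMod.valMinAbs_neg_of_ne_half fun h => by
    obtain ⟨k, rfl⟩ := hr
    omega

lemma odd_valMinAbs_comp (hr : Odd r) {ψ : ZMod q →* ZMod r} (hψ : ψ (-1) = -1) :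
    Function.Odd fun a => (ψ a).valMinAbs := fun a => by
  have hneg : ψ (-a) = -ψ a := by rw [neg_eq_neg_one_mul, map_mul, hψ, neg_one_mul]
  simp only [hneg, valMinAbs_neg_of_odd hr]

variable [NeZero q]

theorem biroSum_eq_zero {n D : ℕ} [NeZero D] [Fact r.Prime] (hr : Odd r) (hrD : ¬r ∣ D)
    {ψ : ZMod q →* ZMod r} (hψ : ψ (-1) = -1) (hψsum : ∑ a, ψ a * (q - a.val) = 0)
    {χ : ZMod D → ℤ} (hχ : χ.Even) (hχ1 : ∀ k, |χ k| ≤ 1)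
    (hcount : CountsConePoints n fun k => χ k) :
    biroSum ψ n n = 0 := by
  have hidentity := congrArg (Int.cast : ℤ → ZMod r)
    (sum_mul_eq_sum_normForm_mul_coneWeight (odd_valMinAbs_comp hr hψ) hχ hχ1 hcount)
  have hweight (a b : ZMod q) :
      ((coneWeight (n : ℤ) a b : ℤ) : ZMod r) = coneWeight (n : ZMod r) a b := by
    simpa using map_coneWeight (Int.castRingHom (ZMod r)) (n : ℤ) a b
  have hproduct (k : ZMod (q * D)) (x y : ZMod r) :
      ∑ a : ZMod q, ψ (a * ZMod.castHom (dvd_mul_right q D) _ k) * x * ((q - a.val) * y) = 0 := by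
    rw [← mul_zero (ψ (ZMod.castHom (dvd_mul_right q D) _ k) * x * y), ← hψsum, Finset.mul_sum]
    refine Finset.sum_congr rfl fun a _ => ?_
    rw [map_mul]
    ring
  push_cast [ZMod.coe_valMinAbs, hweight] at hidentity
  rw [Finset.sum_comm, Finset.sum_congr rfl fun k _ => hproduct k _ _, Finset.sum_const_zero,
    mul_zero] at hidentity
  have hD : (D : ZMod r) ≠ 0 := by rwa [Ne, ZMod.natCast_eq_zero_iff]
  exact (mul_eq_zero.1 hidentity.symm).resolve_left hD

end BiroCongruence

section FiniteCheck

/-- The prime `p` stays prime in the order of discriminant `n ^ 2 + 4`: its norm form has no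
nontrivial zero modulo `p`. -/
def IsInert (p : ℕ) (n : ZMod p) : Prop := ∀ x : ZMod p, normForm n x 1 ≠ 0

instance (p : ℕ) [NeZero p] (n : ZMod p) : Decidable (IsInert p n) :=
  inferInstanceAs (Decidable (∀ _, _))

lemma IsInert.not_dvd {p n : ℕ} [Fact p.Prime] (hp : p ≠ 2) (h : IsInert p n) : ¬p ∣ n ^ 2 + 4 := by
  intro hdvd
  have hdisc : (n : ZMod p) ^ 2 + 4 = 0 := by
    exact_mod_cast (ZMod.natCast_eq_zero_iff _ _).2 hdvd
  have htwo : (2 : ZMod p) ≠ 0 := Ring.two_ne_zero (by rwa [ZMod.ringChar_zmod_n])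
  refine h (-n / 2) ?_
  have hsquare : (2 : ZMod p) ^ 2 * normForm (n : ZMod p) (-n / 2) 1 = -(n ^ 2 + 4) := by
    unfold normForm
    field_simp
    ring
  rw [hdisc, neg_zero] at hsquare
  exact (mul_eq_zero.1 hsquare).resolve_left (pow_ne_zero 2 htwo)

/-- The sum `F 0 + ⋯ + F (n - 1)`, by a recursion that the kernel evaluates efficiently. -/
def rangeSum (n : ℕ) (F : ℕ → ℕ) : ℕ := Nat.rec 0 (fun k s => s + F k) n

lemma rangeSum_eq_sum_range (n : ℕ) (F : ℕ → ℕ) : rangeSum n F = ∑ i ∈ Finset.range n, F i := by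
  induction n with
  | zero => rfl
  | succ n ih => rw [Finset.sum_range_succ, ← ih, rangeSum, rangeSum]

lemma rangeSum_eq_sum_zmod (q : ℕ) [NeZero q] (F : ℕ → ℕ) :
    rangeSum q F = ∑ a : ZMod q, F a.val := by
  rw [rangeSum_eq_sum_range]
  obtain ⟨k, rfl⟩ := Nat.exists_eq_succ_of_ne_zero (NeZero.ne q)
  exact (Fin.sum_univ_eq_sum_range F (k + 1)).symm

lemma rangeSum_pred_eq_sum_zmod (q : ℕ) [NeZero q] (F : ℕ → ℕ) :
    rangeSum (q - 1) (fun b => F (b + 1)) = ∑ b : ZMod q, if b = 0 then 0 else F b.val := by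
  have hval (b : ZMod q) : (if b = 0 then 0 else F b.val) = if b.val = 0 then 0 else F b.val := by
    simp only [ZMod.val_eq_zero]
  simp only [hval, ← rangeSum_eq_sum_zmod q fun i => if i = 0 then 0 else F i]
  obtain ⟨k, rfl⟩ := Nat.exists_eq_succ_of_ne_zero (NeZero.ne q)
  simp [rangeSum_eq_sum_range, Finset.sum_range_succ']

variable {q r : ℕ}

/-- The values of `ψ` as the digits in base `2 ^ 6` of a single number, so that the kernel computes
them only once. -/
def packedValues (ψ : ZMod q →* ZMod r) : ℕ := rangeSum q fun x => (ψ x).val * 2 ^ (6 * x)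

/-- The digit of `packedValues ψ` at the residue of `x`. -/
def packedValue (ψ : ZMod q →* ZMod r) (x : ℕ) : ℕ := packedValues ψ >>> (6 * (x % q)) % 2 ^ 6

/-- The part of `biroSum ψ m s` that does not depend on `s`, with natural number coefficients. -/
def biroMain (ψ : ZMod q →* ZMod r) (m : ℕ) : ℕ :=
  2 * rangeSum q fun a => (q - a) * rangeSum (q - 1) fun b =>
    packedValue ψ (a * (a + m * (b + 1)) + (q - 1) * (b + 1) ^ 2) * (q + (r - 2) * (b + 1))

/-- The coefficient of `s` in `biroSum ψ m s`, with natural number coefficients. -/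
def biroSlope (ψ : ZMod q →* ZMod r) (m : ℕ) : ℕ :=
  rangeSum q fun a => rangeSum q fun b =>
    packedValue ψ (a * (a + m * b) + (q - 1) * b ^ 2) * (b ^ 2 + a * (q - a) + (r - 1) * (q * b))

lemma natCast_packedValue_normForm [NeZero q] {ψ : ZMod q →* ZMod r}
    (hψ : ∀ x, (packedValue ψ x.val : ZMod r) = ψ x) (m a b : ℕ) :
    (packedValue ψ (a * (a + m * b) + (q - 1) * b ^ 2) : ZMod r) =
      ψ (normForm (m : ZMod q) a b) := by
  have hform : normForm (m : ZMod q) a b = (a * (a + m * b) + (q - 1) * b ^ 2 : ℕ) := by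
    rw [normForm]
    push_cast [Nat.cast_pred (NeZero.pos q), ZMod.natCast_self]
    ring
  rw [hform, ← hψ, ZMod.val_natCast, packedValue, packedValue, Nat.mod_mod]

variable [NeZero q] {ψ : ZMod q →* ZMod r}

lemma natCast_biroMain (hr : 2 ≤ r) (hψ : ∀ x, (packedValue ψ x.val : ZMod r) = ψ x)
    (m : ZMod q) :
    (biroMain ψ m.val : ZMod r) =
      ∑ a, ∑ b, ψ (normForm m a b) * if b = 0 then 0 else 2 * ((q : ZMod r) - a.val) *
        (q - 2 * b.val) := by
  have hval (a b : ZMod q) := natCast_packedValue_normForm hψ m.val a.val b.val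
  simp only [ZMod.natCast_zmod_val] at hval
  have hinner (a : ℕ) := rangeSum_pred_eq_sum_zmod q fun b =>
    packedValue ψ (a * (a + m.val * b) + (q - 1) * b ^ 2) * (q + (r - 2) * b)
  simp only [biroMain, hinner, rangeSum_eq_sum_zmod]
  push_cast [hval, Finset.mul_sum, Nat.cast_sub hr, ZMod.natCast_self, Nat.cast_ite]
  refine Finset.sum_congr rfl fun a _ => Finset.sum_congr rfl fun b _ => ?_
  rw [Nat.cast_sub a.val_lt.le]
  split_ifs <;> ring

lemma natCast_biroSlope (hr : 1 ≤ r) (hψ : ∀ x, (packedValue ψ x.val : ZMod r) = ψ x)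
    (m : ZMod q) :
    (biroSlope ψ m.val : ZMod r) =
      ∑ a, ∑ b, ψ (normForm m a b) *
        ((b.val : ZMod r) ^ 2 - q * b.val - a.val ^ 2 + q * a.val) := by
  have hval (a b : ZMod q) := natCast_packedValue_normForm hψ m.val a.val b.val
  simp only [ZMod.natCast_zmod_val] at hval
  simp only [biroSlope, rangeSum_eq_sum_zmod, Nat.cast_sum]
  refine Finset.sum_congr rfl fun a _ => Finset.sum_congr rfl fun b _ => ?_
  push_cast [hval, Nat.cast_sub hr, ZMod.natCast_self, Nat.cast_sub a.val_lt.le]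
  ring

lemma biroSum_eq_natCast (hr : 2 ≤ r) (hψ : ∀ x, (packedValue ψ x.val : ZMod r) = ψ x)
    (m : ZMod q) (s : ZMod r) :
    biroSum ψ m s = (biroMain ψ m.val + s.val * biroSlope ψ m.val : ℕ) := by
  have : NeZero r := ⟨by omega⟩
  push_cast [natCast_biroMain hr hψ, natCast_biroSlope (by omega : 1 ≤ r) hψ, ZMod.natCast_zmod_val]
  simp only [biroSum, Finset.mul_sum, ← Finset.sum_add_distrib, coneWeight]
  refine Finset.sum_congr rfl fun a _ => Finset.sum_congr rfl fun b _ => ?_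
  ring

end FiniteCheck

section NoLargeSolution

/-- The character of order 2 modulo 3. -/
def psi3 : ZMod 3 →* ZMod 13 where
  toFun := ![0, 1, 12]
  map_one' := by decide +kernel
  map_mul' := by decide +kernel

/-- The character of order 4 modulo 5 taking the value 5 at 2. -/
def psi5 : ZMod 5 →* ZMod 13 where
  toFun := ![0, 1, 5, 8, 12]
  map_one' := by decide +kernel
  map_mul' := by decide +kernel

/-- The character of order 6 modulo 7 taking the value 4 at the primitive root 3. -/
def psi7 : ZMod 7 →* ZMod 13 where
  toFun := ![0, 1, 3, 4, 9, 10, 12]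
  map_one' := by decide +kernel
  map_mul' := by decide +kernel

/-- The odd character modulo 105 with values modulo 13 to which Biró's congruence is applied. -/
def psi105 : ZMod 105 →* ZMod 13 :=
  psi3.comp (ZMod.castHom (by norm_num : 3 ∣ 105) (ZMod 3)).toMonoidHom *
    psi5.comp (ZMod.castHom (by norm_num : 5 ∣ 105) (ZMod 5)).toMonoidHom *
    psi7.comp (ZMod.castHom (by norm_num : 7 ∣ 105) (ZMod 7)).toMonoidHom

/-- The character of order 3 modulo 7 taking the value 10 at 3. -/
def psi7' : ZMod 7 →* ZMod 37 where
  toFun := ![0, 1, 26, 10, 10, 26, 1]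
  map_one' := by decide +kernel
  map_mul' := by decide +kernel

/-- The character of order 12 modulo 13 taking the value 8 at the primitive root 2. -/
def psi13 : ZMod 13 →* ZMod 37 where
  toFun := ![0, 1, 8, 26, 27, 6, 23, 14, 31, 10, 11, 29, 36]
  map_one' := by decide +kernel
  map_mul' := by decide +kernel

/-- The odd character modulo 91 with values modulo 37 to which Biró's congruence is applied. -/
def psi91 : ZMod 91 →* ZMod 37 :=
  psi7'.comp (ZMod.castHom (by norm_num : 7 ∣ 91) (ZMod 7)).toMonoidHom *
    psi13.comp (ZMod.castHom (by norm_num : 13 ∣ 91) (ZMod 13)).toMonoidHom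

lemma psi105_neg_one : psi105 (-1) = -1 := by decide +kernel

lemma sum_psi105 : ∑ a, psi105 a * ((105 : ℕ) - a.val) = 0 := by decide +kernel

lemma packedValue_psi105 : ∀ x, (packedValue psi105 x.val : ZMod 13) = psi105 x := by
  decide +kernel

lemma psi91_neg_one : psi91 (-1) = -1 := by decide +kernel

lemma sum_psi91 : ∑ a, psi91 a * ((91 : ℕ) - a.val) = 0 := by decide +kernel

lemma packedValue_psi91 : ∀ x, (packedValue psi91 x.val : ZMod 37) = psi91 x := by
  decide +kernel

/-- The residues of `n` modulo 7 and 13 that are compatible with the inertness of 3, 5, 7 and 13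
and with Biró's congruence modulo 13. -/
def survivors : List (ZMod 7 × ZMod 13) := [(1, 11), (3, 4), (3, 11), (4, 2), (4, 9), (6, 2)]

lemma mem_survivors_of_biroSum_psi105 (m : ZMod 105) (s : ZMod 13)
    (h3 : IsInert 3 (ZMod.castHom (by norm_num) _ m))
    (h5 : IsInert 5 (ZMod.castHom (by norm_num) _ m))
    (h7 : IsInert 7 (ZMod.castHom (by norm_num) _ m)) (h13 : IsInert 13 s)
    (hsum : biroSum psi105 m s = 0) :
    (ZMod.castHom (by norm_num) (ZMod 7) m, s) ∈ survivors := by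
  rw [biroSum_eq_natCast (by norm_num) packedValue_psi105] at hsum
  revert s
  revert m
  decide +kernel

lemma biroSum_psi91_ne_zero (m : ZMod 91) (s : ZMod 37)
    (hm : (ZMod.castHom (by norm_num) (ZMod 7) m, ZMod.castHom (by norm_num) (ZMod 13) m) ∈
      survivors) (h37 : IsInert 37 s) :
    biroSum psi91 m s ≠ 0 := by
  rw [biroSum_eq_natCast (by norm_num) packedValue_psi91]
  revert s
  revert m
  decide +kernel

theorem le_of_countsConePoints {n D : ℕ} [NeZero D] (hD : D = n ^ 2 + 4)
    (hinert : ∀ p, p.Prime → p < n → IsInert p n) {χ : ZMod D → ℤ} (hχ : χ.Even)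
    (hχ1 : ∀ k, |χ k| ≤ 1) (hcount : CountsConePoints n fun k => χ k) : n ≤ 37 := by
  by_contra! hn
  have h13 := hinert 13 (by norm_num) (by omega)
  have h37 := hinert 37 (by norm_num) (by omega)
  have : Fact (Nat.Prime 13) := ⟨by norm_num⟩
  have : Fact (Nat.Prime 37) := ⟨by norm_num⟩
  have hcongr13 := biroSum_eq_zero (by decide : Odd 13) (hD ▸ h13.not_dvd (by norm_num))
    psi105_neg_one sum_psi105 hχ hχ1 hcount
  have hcongr37 := biroSum_eq_zero (by decide : Odd 37) (hD ▸ h37.not_dvd (by norm_num))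
    psi91_neg_one sum_psi91 hχ hχ1 hcount
  have hsurvivor := mem_survivors_of_biroSum_psi105 n n
    (by simpa using hinert 3 (by norm_num) (by omega))
    (by simpa using hinert 5 (by norm_num) (by omega))
    (by simpa using hinert 7 (by norm_num) (by omega)) h13 hcongr13
  exact biroSum_psi91_ne_zero n n (by simpa using hsurvivor) h37 hcongr37

lemma exists_prime_lt_not_isInert {n : ℕ} (hn : n ≤ 37) (hmem : n ∉ [0, 1, 2, 3, 5, 7, 13, 17]) :
    ∃ p, p.Prime ∧ p < n ∧ ¬IsInert p n := by
  have hcheck : ∀ n < 38, n ∉ [0, 1, 2, 3, 5, 7, 13, 17] →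
      ∃ p ∈ [2, 3, 5, 7, 11, 13, 17, 19, 23, 29, 31], p < n ∧
        ∃ x < p, normForm (n : ZMod p) x 1 = 0 := by decide +kernel
  obtain ⟨p, hp, hpn, x, -, hx⟩ := hcheck n (by omega) hmem
  have hprime : ∀ p ∈ [2, 3, 5, 7, 11, 13, 17, 19, 23, 29, 31], p.Prime := by norm_num
  exact ⟨p, hprime p hp, hpn, fun hinert => hinert x hx⟩

end NoLargeSolution

section QuadraticOrder

open QuadraticAlgebra (norm)

section

variable {a b : ℤ}

lemma intCast_dvd_iff {m : ℤ} {α : QuadraticAlgebra ℤ a b} :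
    (m : QuadraticAlgebra ℤ a b) ∣ α ↔ m ∣ α.re ∧ m ∣ α.im := by
  simpa using QuadraticAlgebra.algebraMap_dvd_iff (a := a) (b := b) (r := m) (z := α)

lemma intCast_norm (α : QuadraticAlgebra ℤ a b) :
    ((norm α : ℤ) : QuadraticAlgebra ℤ a b) = α * star α := by
  simpa using QuadraticAlgebra.algebraMap_norm_eq_mul_star α

lemma isUnit_iff_natAbs_norm {α : QuadraticAlgebra ℤ a b} : IsUnit α ↔ (norm α).natAbs = 1 := by
  rw [QuadraticAlgebra.isUnit_iff_norm_isUnit, Int.isUnit_iff_natAbs_eq]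

lemma natAbs_norm_eq_of_associated {α β : QuadraticAlgebra ℤ a b} (h : Associated α β) :
    (norm α).natAbs = (norm β).natAbs := by
  obtain ⟨u, rfl⟩ := h
  rw [map_mul, Int.natAbs_mul, isUnit_iff_natAbs_norm.1 u.isUnit, mul_one]

lemma associated_mul_left_of_natAbs_norm {u : QuadraticAlgebra ℤ a b} (hu : (norm u).natAbs = 1)
    (α : QuadraticAlgebra ℤ a b) : Associated (u * α) α :=
  associated_unit_mul_left α u (isUnit_iff_natAbs_norm.2 hu)

lemma dvd_of_dvd_intCast {p : ℤ} (hp : Prime p) {π : QuadraticAlgebra ℤ a b} (hπ : p ∣ norm π)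
    {m : ℤ} (h : π ∣ m) : p ∣ m := by
  have hnorm : norm π ∣ norm (m : QuadraticAlgebra ℤ a b) := map_dvd _ h
  rw [QuadraticAlgebra.norm_intCast, Int.cast_id] at hnorm
  exact hp.dvd_of_dvd_pow (hπ.trans hnorm)

end

/-- The order `ℤ[ε]` of discriminant `n ^ 2 + 4`, where `ε ^ 2 = n ε + 1`. -/
abbrev EpsOrder (n : ℕ) := QuadraticAlgebra ℤ 1 (n : ℤ)

variable {n : ℕ}

lemma norm_eq_normForm (α : EpsOrder n) : norm α = normForm (n : ℤ) α.re α.im := by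
  rw [QuadraticAlgebra.norm_def, normForm]
  ring

lemma four_mul_normForm {R : Type*} [CommRing R] (n x y : R) :
    4 * normForm n x y = (2 * x + n * y) ^ 2 - (n ^ 2 + 4) * y ^ 2 := by
  unfold normForm
  ring

lemma not_isSquare_sq_add_four [NeZero n] : ¬IsSquare ((n : ℤ) ^ 2 + 4) := by
  have hn : (0 : ℤ) < n := mod_cast NeZero.pos n
  rintro ⟨k, hk⟩
  rw [← abs_mul_abs_self] at hk
  have hlower : (n : ℤ) < |k| := by nlinarith [abs_nonneg k]
  have hupper : |k| < n + 2 := by nlinarith [abs_nonneg k]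
  obtain hk' : |k| = n + 1 := by lia
  rw [hk'] at hk
  lia

lemma norm_ne_zero [NeZero n] {α : EpsOrder n} (hα : α ≠ 0) : norm α ≠ 0 := by
  intro h
  have hsquare : (2 * α.re + n * α.im) ^ 2 = ((n : ℤ) ^ 2 + 4) * α.im ^ 2 := by
    have := four_mul_normForm (n : ℤ) α.re α.im
    rw [← norm_eq_normForm, h] at this
    linear_combination -this
  by_cases him : α.im = 0
  · refine hα (QuadraticAlgebra.ext ?_ him)
    simpa [him] using hsquare
  obtain ⟨k, hk⟩ := (Int.pow_dvd_pow_iff two_ne_zero).1 (Dvd.intro_left _ hsquare.symm)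
  refine not_isSquare_sq_add_four (n := n) ⟨k, mul_right_cancel₀ (pow_ne_zero 2 him) ?_⟩
  rw [← hsquare, hk]
  ring

instance [NeZero n] : IsDomain (EpsOrder n) :=
  have : NoZeroDivisors (EpsOrder n) := ⟨fun {α β} h => by
    by_contra! hne
    refine mul_ne_zero (norm_ne_zero hne.1) (norm_ne_zero hne.2) ?_
    rw [← map_mul, h, QuadraticAlgebra.norm_zero]⟩
  NoZeroDivisors.to_isDomain _

/-- The element `X + Y ε` of `ℤ[ε]` attached to a point `(X, Y)` of the cone. -/
def ofCone (p : cone n) : EpsOrder n := ⟨p.1.1, p.1.2⟩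

lemma norm_ofCone (p : cone n) : norm (ofCone p) = coneNorm n p := by
  rw [norm_eq_normForm, intCast_coneNorm, ofCone]

lemma exists_ofCone_eq {x y : ℤ} (hy : 0 ≤ y) (hlt : y < n * x) :
    ∃ p : cone n, ofCone p = ⟨x, y⟩ := by
  have hx : 0 ≤ x := by
    by_contra! hx
    nlinarith [Int.natCast_nonneg n]
  lift x to ℕ using hx
  lift y to ℕ using hy
  exact ⟨⟨(x, y), by exact_mod_cast hlt⟩, rfl⟩

lemma exists_associated_re_pos [NeZero n] {α : EpsOrder n} (hα : α ≠ 0) :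
    ∃ β : EpsOrder n, Associated β α ∧ 0 < β.re ∧ 0 < norm β := by
  obtain ⟨β, hβα, hβ⟩ : ∃ β : EpsOrder n, Associated β α ∧ 0 < norm β := by
    obtain h | h := (norm_ne_zero hα).lt_or_gt
    · have hε : norm (⟨0, 1⟩ : EpsOrder n) = -1 := by simp [norm_eq_normForm, normForm]
      exact ⟨_, associated_mul_left_of_natAbs_norm (by rw [hε]; rfl) α, by rw [map_mul, hε]; lia⟩
    · exact ⟨α, .refl α, h⟩
  obtain h | h | h := lt_trichotomy β.re 0
  · exact ⟨-β, hβα.neg_left, by simpa using h, by simpa using hβ⟩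
  · rw [norm_eq_normForm, h] at hβ
    unfold normForm at hβ
    nlinarith [sq_nonneg β.im]
  · exact ⟨β, hβα, h, hβ⟩

lemma re_add_mul_im_pos {β : EpsOrder n} (hre : 0 < β.re) (hβ : 0 < norm β) :
    0 < β.re + n * β.im := by
  rw [norm_eq_normForm, normForm] at hβ
  refine pos_of_mul_pos_right (a := β.re) ?_ hre.le
  nlinarith [sq_nonneg β.im]

-- Among the associates with positive norm and positive real part, one with least real part lies
-- in the closed cone, because `ε ^ 2` and `ε ^ (-2)` do not decrease its real part.
lemma exists_associated_mem_closed_cone [NeZero n] {α : EpsOrder n} (hα : α ≠ 0) :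
    ∃ β : EpsOrder n, Associated β α ∧ 0 < β.re ∧ 0 ≤ β.im ∧ β.im ≤ n * β.re := by
  let S : Set (EpsOrder n) := {β | Associated β α ∧ 0 < β.re ∧ 0 < norm β}
  obtain ⟨β, ⟨hβα, hre, hβ⟩, hmin⟩ :=
    (measure fun β : EpsOrder n => β.re.toNat).wf.has_min S (exists_associated_re_pos hα)
  have hn : (0 : ℤ) < n := mod_cast NeZero.pos n
  have hle (u : EpsOrder n) (hu : norm u = 1) (hpos : 0 < (u * β).re) : β.re ≤ (u * β).re := by
    have hmem : u * β ∈ S :=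
      ⟨(associated_mul_left_of_natAbs_norm (by rw [hu]; rfl) β).trans hβα, hpos,
        by rwa [map_mul, hu, one_mul]⟩
    have : ¬(u * β).re.toNat < β.re.toNat := hmin _ hmem
    lia
  have hsq : norm (⟨1, n⟩ : EpsOrder n) = 1 := by rw [norm_eq_normForm, normForm]; ring
  have hinv : norm (⟨n ^ 2 + 1, -n⟩ : EpsOrder n) = 1 := by rw [norm_eq_normForm, normForm]; ring
  have hsq_re : ((⟨1, n⟩ : EpsOrder n) * β).re = β.re + n * β.im := by simp
  have hinv_re : ((⟨n ^ 2 + 1, -n⟩ : EpsOrder n) * β).re = (n ^ 2 + 1) * β.re - n * β.im := by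
    simp
    ring
  refine ⟨β, hβα, hre, ?_, ?_⟩
  · have := hle _ hsq (by rw [hsq_re]; exact re_add_mul_im_pos hre hβ)
    rw [hsq_re] at this
    exact nonneg_of_mul_nonneg_right (by lia) hn
  · have hpos : 0 < ((n : ℤ) ^ 2 + 1) * β.re - n * β.im := by
      rw [norm_eq_normForm, normForm] at hβ
      refine pos_of_mul_pos_right (a := β.re) ?_ hre.le
      nlinarith [sq_nonneg (n * β.re - β.im)]
    have := hle _ hinv (by rwa [hinv_re])
    rw [hinv_re] at this
    nlinarith

theorem exists_ofCone_associated [NeZero n] {α : EpsOrder n} (hα : α ≠ 0) :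
    ∃ p : cone n, Associated (ofCone p) α := by
  obtain ⟨β, hβα, hre, him, hle⟩ := exists_associated_mem_closed_cone hα
  have hn : (0 : ℤ) < n := mod_cast NeZero.pos n
  obtain hlt | heq := hle.lt_or_eq
  · obtain ⟨p, hp⟩ := exists_ofCone_eq him hlt
    exact ⟨p, hp ▸ hβα⟩
  · obtain ⟨p, hp⟩ := exists_ofCone_eq le_rfl (mul_pos hn hre)
    have hmul : (⟨1, n⟩ : EpsOrder n) * ofCone p = β := by
      rw [hp]
      ext <;> simp [heq]
    have hunit : (norm (⟨1, n⟩ : EpsOrder n)).natAbs = 1 := by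
      rw [norm_eq_normForm, normForm]
      ring_nf
      rfl
    exact ⟨p, (associated_mul_left_of_natAbs_norm hunit _).symm.trans (hmul ▸ hβα)⟩

section

variable {p q : cone n}

lemma norm_eq_one_of_mul_ofCone (u : (EpsOrder n)ˣ) (h : u * ofCone p = ofCone q) :
    norm (u : EpsOrder n) = 1 := by
  have hmul := congrArg QuadraticAlgebra.norm h
  rw [map_mul, norm_ofCone, norm_ofCone] at hmul
  have hpos : 0 < norm (u : EpsOrder n) := by
    refine pos_of_mul_pos_left (b := (coneNorm n p : ℤ)) ?_ (Nat.cast_nonneg _)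
    rw [hmul]
    exact mod_cast Nat.pos_of_ne_zero (coneNorm_ne_zero q)
  have := isUnit_iff_natAbs_norm.1 u.isUnit
  lia

lemma re_pos_of_mul_ofCone {u : EpsOrder n} (h : u * ofCone p = ofCone q) : 0 < u.re := by
  have hre := congrArg QuadraticAlgebra.re h
  have him := congrArg QuadraticAlgebra.im h
  have hp : (0 : ℤ) < p.1.1 := mod_cast fst_pos_of_mem_cone p.2
  have hq : (0 : ℤ) < q.1.1 := mod_cast fst_pos_of_mem_cone q.2
  have hlt : (q.1.2 : ℤ) < n * q.1.1 := mod_cast q.2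
  simp only [ofCone, QuadraticAlgebra.re_mul, QuadraticAlgebra.im_mul] at hre him
  have hcoef : (coneNorm n p : ℤ) * u.re = q.1.1 * p.1.1 + p.1.2 * (n * q.1.1 - q.1.2) := by
    rw [intCast_coneNorm, ← hre, ← him, normForm]
    ring
  refine pos_of_mul_pos_right (a := (coneNorm n p : ℤ)) ?_ (Nat.cast_nonneg _)
  rw [hcoef]
  have := mul_nonneg (Int.natCast_nonneg p.1.2) (sub_nonneg.2 hlt.le)
  positivity

lemma im_nonpos_of_mul_ofCone {u : EpsOrder n} (hu : norm u = 1) (h : u * ofCone p = ofCone q) :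
    u.im ≤ 0 := by
  have hre := congrArg QuadraticAlgebra.re h
  have him := congrArg QuadraticAlgebra.im h
  have hu_re := re_pos_of_mul_ofCone h
  have hp : (0 : ℤ) < p.1.1 := mod_cast fst_pos_of_mem_cone p.2
  have hlt : (q.1.2 : ℤ) < n * q.1.1 := mod_cast q.2
  simp only [ofCone, QuadraticAlgebra.re_mul, QuadraticAlgebra.im_mul] at hre him
  by_contra! hpos
  have hu_lt : u.im < n * u.re := by
    have : 0 ≤ u.re * (p.1.2 : ℤ) := by positivity
    refine lt_of_mul_lt_mul_right (a := (p.1.1 : ℤ)) ?_ hp.le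
    rw [← hre, ← him] at hlt
    linarith
  rw [norm_eq_normForm, normForm] at hu
  nlinarith [mul_pos hpos (sub_pos.2 hu_lt), mul_pos hu_re hu_re]

theorem eq_of_associated_ofCone (h : Associated (ofCone p) (ofCone q)) : p = q := by
  obtain ⟨u, hu⟩ := h
  rw [mul_comm] at hu
  have hnorm := norm_eq_one_of_mul_ofCone u hu
  have hstar : star (u : EpsOrder n) * ofCone q = ofCone p := by
    rw [← hu, ← mul_assoc, mul_comm (star _), ← intCast_norm, hnorm, Int.cast_one, one_mul]
  have him : (u : EpsOrder n).im = 0 := by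
    refine (im_nonpos_of_mul_ofCone hnorm hu).antisymm ?_
    have := im_nonpos_of_mul_ofCone (by rwa [QuadraticAlgebra.norm_star]) hstar
    simpa using this
  have hre : (u : EpsOrder n).re = 1 := by
    have := re_pos_of_mul_ofCone hu
    rw [norm_eq_normForm, him] at hnorm
    simp only [normForm] at hnorm
    nlinarith
  have hone : (u : EpsOrder n) = 1 := QuadraticAlgebra.ext hre him
  rw [hone, one_mul] at hu
  have hX := congrArg QuadraticAlgebra.re hu
  have hY := congrArg QuadraticAlgebra.im hu
  simp only [ofCone, Nat.cast_inj] at hX hY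
  exact Subtype.ext (Prod.ext hX hY)

end

/-- The absolute value of the norm, on classes of associate elements. -/
def assocNorm (n : ℕ) : Associates (EpsOrder n) →*₀ ℕ where
  toFun := Quotient.lift (fun α => (norm α).natAbs) fun _ _ => natAbs_norm_eq_of_associated
  map_zero' := congrArg Int.natAbs QuadraticAlgebra.norm_zero
  map_one' := congrArg Int.natAbs QuadraticAlgebra.norm_one
  map_mul' c d := by
    induction c, d using Quotient.inductionOn₂ with
    | h α β =>
      have hmul := map_mul QuadraticAlgebra.norm α β
      exact (congrArg Int.natAbs hmul).trans (Int.natAbs_mul _ _)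

lemma assocNorm_mk (α : EpsOrder n) : assocNorm n (Associates.mk α) = (norm α).natAbs := rfl

lemma bijOn_mk_ofCone [NeZero n] {N : ℕ} (hN : N ≠ 0) :
    Set.BijOn (fun p : cone n => Associates.mk (ofCone p)) (coneNorm n ⁻¹' {N})
      (assocNorm n ⁻¹' {N}) := by
  have hnorm (p : cone n) : assocNorm n (Associates.mk (ofCone p)) = coneNorm n p := by
    rw [assocNorm_mk, norm_ofCone, Int.natAbs_natCast]
  refine ⟨fun p hp => (hnorm p).trans hp,
    fun p _ q _ h => eq_of_associated_ofCone (Associates.mk_eq_mk_iff_associated.1 h), ?_⟩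
  intro c hc
  obtain ⟨α, rfl⟩ := Associates.mk_surjective c
  have hα : α ≠ 0 := by
    rintro rfl
    exact hN (hc.symm.trans (map_zero (assocNorm n)))
  obtain ⟨p, hp⟩ := exists_ofCone_associated hα
  have hmk := Associates.mk_eq_mk_iff_associated.2 hp
  exact ⟨p, by rw [Set.mem_preimage, ← hnorm, hmk]; exact hc, hmk⟩

lemma finite_coneNorm_preimage (N : ℕ) : (coneNorm n ⁻¹' {N}).Finite := by
  refine .of_finite_image (f := Subtype.val) (((Set.finite_Iic N).prod
    (Set.finite_Iic (n * N))).subset ?_) Subtype.val_injective.injOn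
  rintro _ ⟨p, rfl, rfl⟩
  have hX : p.1.1 ≤ coneNorm n p := (Nat.le_self_pow two_ne_zero _).trans (sq_fst_le_coneNorm p)
  exact ⟨hX, (le_of_lt p.2).trans (Nat.mul_le_mul_left n hX)⟩

lemma finite_assocNorm_preimage [NeZero n] {N : ℕ} (hN : N ≠ 0) :
    (assocNorm n ⁻¹' {N}).Finite := by
  rw [← (bijOn_mk_ofCone hN).image_eq]
  exact (finite_coneNorm_preimage N).image _

lemma le_coneNorm {p : cone n} (hp : p.1.2 ≠ 0) : n ≤ coneNorm n p := by
  have hY : (1 : ℤ) ≤ p.1.2 := by lia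
  have hX : (1 : ℤ) ≤ p.1.1 := mod_cast fst_pos_of_mem_cone p.2
  have hlt : (p.1.2 : ℤ) + 1 ≤ n * p.1.1 := mod_cast p.2
  zify
  rw [intCast_coneNorm, normForm]
  nlinarith [mul_nonneg (sub_nonneg.2 hY) (sub_nonneg.2 hlt), mul_nonneg (Int.natCast_nonneg n)
    (sub_nonneg.2 hX)]

end QuadraticOrder

section Counting

section HeckeRecursion

/-- The recursion at the primes satisfied by the coefficients of the Dirichlet series with Euler
product `∏ ((1 - p ^ (-s)) (1 - χ(p) p ^ (-s)))⁻¹`. -/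
def HeckeRecursion (χ f : ℕ → ℤ) : Prop :=
  ∀ p M : ℕ, p.Prime → M ≠ 0 →
    f (p * M) + (if p ∣ M then χ p * f (M / p) else 0) = (1 + χ p) * f M

variable {χ f g : ℕ → ℤ}

theorem HeckeRecursion.eq (hf : HeckeRecursion χ f) (hg : HeckeRecursion χ g) (h1 : f 1 = g 1)
    {N : ℕ} (hN : N ≠ 0) : f N = g N := by
  induction N using Nat.strong_induction_on with
  | h N ih =>
    obtain rfl | hne := eq_or_ne N 1
    · exact h1
    obtain ⟨p, hp, M, rfl⟩ := Nat.exists_prime_and_dvd hne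
    have hM : M ≠ 0 := right_ne_zero_of_mul hN
    have hlt : M < p * M := lt_mul_of_one_lt_left (Nat.pos_of_ne_zero hM) hp.one_lt
    have hdiv : (if p ∣ M then χ p * f (M / p) else 0) = if p ∣ M then χ p * g (M / p) else 0 := by
      split_ifs with hdvd
      · rw [ih _ ((Nat.div_le_self M p).trans_lt hlt) (Nat.div_ne_zero_iff_of_dvd hdvd |>.2
          ⟨hM, hp.ne_zero⟩)]
      · rfl
    have hrec := hf p M hp hM
    rwa [hdiv, ih M hlt hM, ← hg p M hp hM, add_left_inj] at hrec

lemma sum_divisors_filter_dvd (hχ : ∀ a b, χ (a * b) = χ a * χ b) {p : ℕ} (hp : p ≠ 0) (M : ℕ) :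
    ∑ d ∈ (p * M).divisors with p ∣ d, χ d = χ p * ∑ d ∈ M.divisors, χ d := by
  have himage : (p * M).divisors.filter (p ∣ ·) = M.divisors.image (p * ·) := by
    ext d
    simp only [Finset.mem_filter, Nat.mem_divisors, Finset.mem_image]
    constructor
    · rintro ⟨⟨hdvd, hne⟩, e, rfl⟩
      exact ⟨e, ⟨(Nat.mul_dvd_mul_iff_left (Nat.pos_of_ne_zero hp)).1 hdvd,
        right_ne_zero_of_mul hne⟩, rfl⟩
    · rintro ⟨e, ⟨hdvd, hne⟩, rfl⟩
      exact ⟨⟨Nat.mul_dvd_mul_left p hdvd, mul_ne_zero hp hne⟩, dvd_mul_right p e⟩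
  rw [himage, Finset.sum_image (mul_right_injective₀ hp).injOn, Finset.mul_sum]
  exact Finset.sum_congr rfl fun d _ => hχ p d

theorem heckeRecursion_sum_divisors (hχ : ∀ a b, χ (a * b) = χ a * χ b) :
    HeckeRecursion χ fun N => ∑ d ∈ N.divisors, χ d := by
  intro p M hp _
  have hmultiples : (if p ∣ M then χ p * ∑ d ∈ (M / p).divisors, χ d else 0) =
      ∑ d ∈ M.divisors with p ∣ d, χ d := by
    split_ifs with hdvd
    · conv_rhs => rw [← Nat.mul_div_cancel' hdvd]
      rw [sum_divisors_filter_dvd hχ hp.ne_zero]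
    · refine (Finset.sum_eq_zero fun d hd => ?_).symm
      rw [Finset.mem_filter, Nat.mem_divisors] at hd
      exact absurd (hd.2.trans hd.1.1) hdvd
  have hcoprime : (p * M).divisors.filter (¬p ∣ ·) = M.divisors.filter (¬p ∣ ·) := by
    ext d
    simp only [Finset.mem_filter, Nat.mem_divisors, and_congr_left_iff]
    intro hd
    have hcop : d.Coprime p := ((Nat.Prime.coprime_iff_not_dvd hp).2 hd).symm
    simp [hcop.dvd_mul_left, hp.ne_zero]
  dsimp only
  rw [hmultiples, ← Finset.sum_filter_add_sum_filter_not _ (p ∣ ·), hcoprime,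
    sum_divisors_filter_dvd hχ hp.ne_zero, add_assoc, add_comm (∑ d ∈ M.divisors with ¬p ∣ d, χ d),
    Finset.sum_filter_add_sum_filter_not]
  ring

end HeckeRecursion

section Fibers

variable {A : Type*} [CommMonoidWithZero A] [IsLeftCancelMulZero A] {ν : A →*₀ ℕ} {a b : A} {p : ℕ}

lemma ncard_preimage_mul_inter_dvd (ha : ν a ≠ 0) (M : ℕ) :
    (ν ⁻¹' {ν a * M} ∩ {c | a ∣ c}).ncard = (ν ⁻¹' {M}).ncard := by
  have hne : a ≠ 0 := by
    rintro rfl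
    exact ha (map_zero ν)
  have himage : ν ⁻¹' {ν a * M} ∩ {c | a ∣ c} = (a * ·) '' (ν ⁻¹' {M}) := by
    ext c
    constructor
    · rintro ⟨hc, d, rfl⟩
      rw [Set.mem_preimage, map_mul, Set.mem_singleton_iff] at hc
      exact ⟨d, Nat.eq_of_mul_eq_mul_left (Nat.pos_of_ne_zero ha) hc, rfl⟩
    · rintro ⟨d, rfl, rfl⟩
      exact ⟨map_mul ν a d, dvd_mul_right a d⟩
  rw [himage, Set.ncard_image_of_injective _ (mul_right_injective₀ hne)]

lemma ncard_preimage_prime_mul_inter_dvd (hp : p ≠ 0) (ha : ν a = p ^ 2) (M : ℕ) :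
    (ν ⁻¹' {p * M} ∩ {c | a ∣ c}).ncard = if p ∣ M then (ν ⁻¹' {M / p}).ncard else 0 := by
  split_ifs with hdvd
  · obtain ⟨K, rfl⟩ := hdvd
    rw [Nat.mul_div_cancel_left K (Nat.pos_of_ne_zero hp), ← mul_assoc, ← sq, ← ha]
    exact ncard_preimage_mul_inter_dvd (ha ▸ pow_ne_zero 2 hp) K
  · suffices ν ⁻¹' {p * M} ∩ {c | a ∣ c} = ∅ by rw [this, Set.ncard_empty]
    refine Set.eq_empty_of_forall_notMem fun c ⟨(hc : ν c = p * M), hac⟩ => hdvd ?_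
    have hsq : ν a ∣ ν c := map_dvd ν hac
    rw [ha, hc, sq] at hsq
    exact Nat.dvd_of_mul_dvd_mul_left (Nat.pos_of_ne_zero hp) hsq

lemma ncard_preimage_of_inert (hp : p ≠ 0) (ha : ν a = p ^ 2) (hdvd : ∀ c, p ∣ ν c → a ∣ c)
    (M : ℕ) :
    (ν ⁻¹' {p * M}).ncard = if p ∣ M then (ν ⁻¹' {M / p}).ncard else 0 := by
  rw [← ncard_preimage_prime_mul_inter_dvd hp ha, Set.inter_eq_left.2]
  rintro c (hc : ν c = p * M)
  exact hdvd c (hc ▸ dvd_mul_right p M)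

lemma ncard_preimage_of_ramified (hp : p ≠ 0) (ha : ν a = p) (hdvd : ∀ c, p ∣ ν c → a ∣ c)
    (M : ℕ) : (ν ⁻¹' {p * M}).ncard = (ν ⁻¹' {M}).ncard := by
  rw [← ncard_preimage_mul_inter_dvd (ha ▸ hp) M, ha, Set.inter_eq_left.2]
  rintro c (hc : ν c = p * M)
  exact hdvd c (hc ▸ dvd_mul_right p M)

lemma ncard_preimage_of_split (hp : p ≠ 0) (ha : ν a = p) (hb : ν b = p)
    (hdvd : ∀ c, p ∣ ν c → a ∣ c ∨ b ∣ c) (hmul : ∀ c, a ∣ c → b ∣ c → a * b ∣ c) {M : ℕ}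
    (hfin : (ν ⁻¹' {p * M}).Finite) :
    (ν ⁻¹' {p * M}).ncard + (if p ∣ M then (ν ⁻¹' {M / p}).ncard else 0) =
      2 * (ν ⁻¹' {M}).ncard := by
  set F := ν ⁻¹' {p * M}
  have hunion : F ∩ {c | a ∣ c} ∪ F ∩ {c | b ∣ c} = F := by
    rw [← Set.inter_union_distrib_left, Set.inter_eq_left]
    rintro c (hc : ν c = p * M)
    exact hdvd c (hc ▸ dvd_mul_right p M)
  have hinter : F ∩ {c | a ∣ c} ∩ (F ∩ {c | b ∣ c}) = F ∩ {c | a * b ∣ c} := by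
    rw [← Set.inter_inter_distrib_left]
    congr 1
    ext c
    exact ⟨fun h => hmul c h.1 h.2, fun h => ⟨dvd_of_mul_right_dvd h, dvd_of_mul_left_dvd h⟩⟩
  have hcard := Set.ncard_union_add_ncard_inter (F ∩ {c | a ∣ c}) (F ∩ {c | b ∣ c})
    (hfin.inter_of_left _) (hfin.inter_of_left _)
  rw [hunion, hinter, ncard_preimage_prime_mul_inter_dvd hp (by rw [map_mul, ha, hb, sq])] at hcard
  have hFa : (F ∩ {c | a ∣ c}).ncard = (ν ⁻¹' {M}).ncard := by
    rw [← ncard_preimage_mul_inter_dvd (ha ▸ hp), ha]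
  have hFb : (F ∩ {c | b ∣ c}).ncard = (ν ⁻¹' {M}).ncard := by
    rw [← ncard_preimage_mul_inter_dvd (hb ▸ hp), hb]
  rw [hcard, hFa, hFb, two_mul]

end Fibers

end Counting

section Primes

open QuadraticAlgebra (norm)
open scoped NumberTheorySymbols

variable {n p : ℕ}

lemma IsInert.intCast_dvd_of_dvd_norm [Fact p.Prime] (h : IsInert p n) {α : EpsOrder n}
    (hα : (p : ℤ) ∣ norm α) : ((p : ℤ) : EpsOrder n) ∣ α := by
  rw [intCast_dvd_iff, ← ZMod.intCast_zmod_eq_zero_iff_dvd, ← ZMod.intCast_zmod_eq_zero_iff_dvd]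
  have hform : normForm (n : ZMod p) α.re α.im = 0 := by
    rw [norm_eq_normForm, ← ZMod.intCast_zmod_eq_zero_iff_dvd] at hα
    simpa [normForm] using hα
  by_cases him : (α.im : ZMod p) = 0
  · rw [him] at hform
    exact ⟨by simpa [normForm] using hform, him⟩
  · refine absurd ?_ (h (α.re / α.im))
    refine (mul_eq_zero_iff_right (pow_ne_zero 2 him)).1 (hform ▸ ?_)
    unfold normForm
    field_simp

lemma isInert_iff_not_isSquare [Fact p.Prime] (hp : p ≠ 2) {n : ZMod p} :
    IsInert p n ↔ ¬IsSquare (n ^ 2 + 4) := by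
  have : NeZero (2 : ZMod p) := ⟨Ring.two_ne_zero (by rwa [ZMod.ringChar_zmod_n])⟩
  have hiff (x : ZMod p) : normForm n x 1 = 0 ↔ n ^ 2 + 4 = (2 * x + n) ^ 2 := by
    have hfour := four_mul_normForm n x 1
    have hne : (4 : ZMod p) ≠ 0 := by
      rw [show (4 : ZMod p) = 2 ^ 2 by norm_num]
      exact pow_ne_zero 2 two_ne_zero
    rw [← mul_eq_zero_iff_left hne, hfour, mul_one, one_pow, mul_one, sub_eq_zero, eq_comm]
  rw [← not_iff_not, not_not, IsInert]
  push Not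
  simp only [hiff, isSquare_iff_exists_sq]
  refine ⟨fun ⟨x, hx⟩ => ⟨_, hx⟩, fun ⟨s, hs⟩ => ⟨(s - n) / 2, ?_⟩⟩
  rw [hs, mul_div_cancel₀ _ two_ne_zero, sub_add_cancel]

lemma sq_add_four_mod_eight (hn : Odd n) : (n ^ 2 + 4) % 8 = 5 := by
  obtain ⟨k, rfl⟩ := hn
  obtain ⟨j, hj⟩ := Nat.even_mul_succ_self k
  have : (2 * k + 1) ^ 2 + 4 = 8 * j + 5 := by linear_combination 4 * hj
  lia

lemma jacobiSym_sq_add_four_eq_neg_one_iff (hn : Odd n) (hp : p.Prime) :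
    J(p | n ^ 2 + 4) = -1 ↔ IsInert p n := by
  have hD := sq_add_four_mod_eight hn
  obtain rfl | hp2 := eq_or_ne p 2
  · have hn2 : (n : ZMod 2) = 1 := ZMod.natCast_eq_one_iff_odd.2 hn
    rw [Nat.cast_ofNat, jacobiSym.at_two (Nat.odd_iff.2 (by lia)), ZMod.χ₈_nat_mod_eight, hD, hn2]
    exact iff_of_true rfl (by decide)
  · have := Fact.mk hp
    rw [← jacobiSym.quadratic_reciprocity_one_mod_four (by lia) (hp.odd_of_ne_two hp2),
      ZMod.nonsquare_iff_jacobiSym_eq_neg_one, isInert_iff_not_isSquare hp2]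
    push_cast
    rfl

lemma jacobiSym_sq_add_four_eq_zero_iff (hp : p.Prime) :
    J(p | n ^ 2 + 4) = 0 ↔ p ∣ n ^ 2 + 4 := by
  rw [jacobiSym.eq_zero_iff_not_coprime, Int.gcd_natCast_natCast, ne_eq,
    ← Nat.coprime_iff_gcd_eq_one, hp.coprime_iff_not_dvd, not_not]

lemma jacobiSym_congr {D : ℕ} {a b : ℤ} (h : (a : ZMod D) = b) : J(a | D) = J(b | D) :=
  jacobiSym.mod_left' ((ZMod.intCast_eq_intCast_iff a b D).1 h)

lemma even_jacobiSym_cast (hn : Odd n) :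
    (fun k : ZMod (n ^ 2 + 4) => J(k.cast | n ^ 2 + 4)).Even := by
  intro k
  have hD := sq_add_four_mod_eight hn
  have hneg : (((-k).cast : ℤ) : ZMod (n ^ 2 + 4)) = (-k.cast : ℤ) := by simp
  dsimp only
  rw [jacobiSym_congr hneg, jacobiSym.neg _ (Nat.odd_iff.2 (by lia)),
    ZMod.χ₄_nat_one_mod_four (by lia), one_mul]

section NormPrime

variable {π : EpsOrder n}

lemma not_intCast_dvd_of_natAbs_norm (hp : p.Prime) (hπ : (norm π).natAbs = p) :
    ¬((p : ℤ) : EpsOrder n) ∣ π := by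
  intro h
  have hnorm := Int.natAbs_dvd_natAbs.2 (map_dvd QuadraticAlgebra.norm h)
  rw [QuadraticAlgebra.norm_intCast, hπ, Int.cast_id, Int.natAbs_pow, Int.natAbs_natCast] at hnorm
  nlinarith [Nat.le_of_dvd hp.pos hnorm, hp.two_le]

lemma not_dvd_im_of_natAbs_norm (hp : p.Prime) (hπ : (norm π).natAbs = p) :
    ¬π ∣ (π.im : EpsOrder n) := by
  intro h
  have hp' : Prime (p : ℤ) := Nat.prime_iff_prime_int.1 hp
  have hpπ : (p : ℤ) ∣ norm π := hπ ▸ Int.natAbs_dvd.2 dvd_rfl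
  have him : (p : ℤ) ∣ π.im := dvd_of_dvd_intCast hp' hpπ h
  refine not_intCast_dvd_of_natAbs_norm hp hπ (intCast_dvd_iff.2 ⟨?_, him⟩)
  have hsq : π.re ^ 2 = norm π - π.im * (n * π.re - π.im) := by
    rw [norm_eq_normForm, normForm]
    ring
  exact hp'.dvd_of_dvd_pow (hsq ▸ dvd_sub hpπ (him.mul_right _))

lemma prime_of_natAbs_norm [NeZero n] [IsPrincipalIdealRing (EpsOrder n)]
    (hπ : (norm π).natAbs.Prime) : Prime π := by
  refine Irreducible.prime ⟨fun h => hπ.ne_one (isUnit_iff_natAbs_norm.1 h), ?_⟩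
  rintro α β rfl
  rw [map_mul, Int.natAbs_mul] at hπ
  simpa only [isUnit_iff_natAbs_norm, Nat.isUnit_iff] using hπ.isUnit_or_isUnit rfl

lemma dvd_intCast_of_norm_dvd {m : ℤ} (h : norm π ∣ m) : π ∣ (m : EpsOrder n) :=
  (intCast_norm π ▸ dvd_mul_right π (star π)).trans (Int.cast_dvd_cast _ _ h)

lemma dvd_or_star_dvd (hπ : Prime π) {α : EpsOrder n} (h : norm π ∣ norm α) :
    π ∣ α ∨ star π ∣ α := by
  have hdvd : π ∣ α * star α := intCast_norm α ▸ dvd_intCast_of_norm_dvd h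
  refine (hπ.dvd_or_dvd hdvd).imp_right fun hstar => ?_
  simpa [starRingEnd_apply] using map_dvd (starRingEnd (EpsOrder n)) hstar

-- `δ = ε - star ε` is a square root of `n ^ 2 + 4`, and `π - star π = π.im * δ`.
lemma associated_star_iff [NeZero n] [IsPrincipalIdealRing (EpsOrder n)] (hp : p.Prime)
    (hπ : (norm π).natAbs = p) : Associated π (star π) ↔ p ∣ n ^ 2 + 4 := by
  have hprime : Prime π := prime_of_natAbs_norm (hπ ▸ hp)
  have hprime' : Prime (star π) :=
    prime_of_natAbs_norm (by rwa [QuadraticAlgebra.norm_star, hπ])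
  let δ : EpsOrder n := ⟨-n, 2⟩
  have hδ : δ * δ = ((n ^ 2 + 4 : ℕ) : EpsOrder n) := by
    ext
    · rw [QuadraticAlgebra.re_natCast]
      simp [δ]
      ring
    · rw [QuadraticAlgebra.im_natCast]
      simp [δ]
      ring
  have hδnorm : norm δ = -((n ^ 2 + 4 : ℕ) : ℤ) := by
    rw [norm_eq_normForm, normForm]
    push_cast
    ring
  have hsub : π - star π = (π.im : EpsOrder n) * δ := by
    ext <;> simp [δ] <;> ring
  constructor
  · intro h
    have hdvd : π ∣ (π.im : EpsOrder n) * δ := hsub ▸ dvd_sub dvd_rfl h.dvd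
    have hπδ := (hprime.dvd_or_dvd hdvd).resolve_left (not_dvd_im_of_natAbs_norm hp hπ)
    have hnorm := Int.natAbs_dvd_natAbs.2 (map_dvd QuadraticAlgebra.norm hπδ)
    rwa [hπ, hδnorm, Int.natAbs_neg, Int.natAbs_natCast] at hnorm
  · intro h
    have hdvd : π ∣ δ * δ := by
      rw [hδ]
      refine dvd_trans ?_ (Nat.cast_dvd_cast h)
      exact_mod_cast dvd_intCast_of_norm_dvd (hπ ▸ Int.dvd_natAbs.2 dvd_rfl)
    have hπδ : π ∣ δ := (hprime.dvd_or_dvd hdvd).elim id id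
    refine hprime.associated_of_dvd hprime' ?_
    rw [← dvd_sub_self_left, hsub]
    exact hπδ.mul_left _

end NormPrime

section

variable [NeZero n] [IsPrincipalIdealRing (EpsOrder n)]

theorem exists_natAbs_norm_eq (hp : p.Prime) (h : ¬IsInert p n) :
    ∃ π : EpsOrder n, (norm π).natAbs = p := by
  unfold IsInert at h
  push Not at h
  obtain ⟨z, hz⟩ := h
  obtain ⟨x, rfl⟩ := ZMod.intCast_surjective z
  let α : EpsOrder n := ⟨x, 1⟩
  have hdvd : ((p : ℤ) : EpsOrder n) ∣ α * star α := by
    rw [← intCast_norm, norm_eq_normForm]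
    refine Int.cast_dvd_cast _ _ ((ZMod.intCast_zmod_eq_zero_iff_dvd _ _).1 ?_)
    simpa [normForm, α] using hz
  have hnot : ¬(p : ℤ) ∣ 1 := (Nat.prime_iff_prime_int.1 hp).not_dvd_one
  have hnotPrime : ¬Prime ((p : ℤ) : EpsOrder n) := by
    intro hprime
    obtain h | h := hprime.dvd_or_dvd hdvd
    · exact hnot (intCast_dvd_iff.1 h).2
    · exact hnot (by simpa [α] using (intCast_dvd_iff.1 h).2)
  have hunit : ¬IsUnit ((p : ℤ) : EpsOrder n) := by
    simp [isUnit_iff_natAbs_norm, Int.natAbs_pow, hp.ne_one]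
  rw [← irreducible_iff_prime, irreducible_iff] at hnotPrime
  push Not at hnotPrime
  obtain ⟨a, b, hab, ha, hb⟩ := hnotPrime hunit
  have hnorm : (norm a).natAbs * (norm b).natAbs = p ^ 2 := by
    rw [← Int.natAbs_mul, ← map_mul, ← hab]
    simp [Int.natAbs_pow]
  rw [isUnit_iff_natAbs_norm] at ha hb
  exact ⟨a, ((Nat.Prime.mul_eq_prime_sq_iff hp ha hb).1 hnorm).1⟩

theorem isInert_of_lt (hp : p.Prime) (hlt : p < n) : IsInert p n := by
  by_contra h
  obtain ⟨π, hπ⟩ := exists_natAbs_norm_eq hp h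
  have hπ0 : π ≠ 0 := by
    rintro rfl
    exact hp.ne_zero (by simpa using hπ.symm)
  obtain ⟨q, hq⟩ := exists_ofCone_associated hπ0
  have hnorm : coneNorm n q = p := by
    rw [← hπ, ← natAbs_norm_eq_of_associated hq, norm_ofCone, Int.natAbs_natCast]
  by_cases hY : q.1.2 = 0
  · refine hp.prime.not_isSquare ⟨q.1.1, ?_⟩
    simp [← hnorm, coneNorm, hY, sq]
  · exact hlt.not_ge (hnorm ▸ le_coneNorm hY)

end

end Primes

section AssociateCount

open QuadraticAlgebra (norm)
open scoped NumberTheorySymbols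

variable {n p : ℕ}

lemma IsInert.ncard_assocNorm_preimage [NeZero n] [Fact p.Prime] (h : IsInert p n) (M : ℕ) :
    (assocNorm n ⁻¹' {p * M}).ncard = if p ∣ M then (assocNorm n ⁻¹' {M / p}).ncard else 0 := by
  refine ncard_preimage_of_inert (a := Associates.mk ((p : ℤ) : EpsOrder n)) (NeZero.ne p) ?_ ?_ M
  · rw [assocNorm_mk, QuadraticAlgebra.norm_intCast, Int.cast_id, Int.natAbs_pow,
      Int.natAbs_natCast]
  · intro c hc
    obtain ⟨α, rfl⟩ := Associates.mk_surjective c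
    exact Associates.mk_dvd_mk.2 (h.intCast_dvd_of_dvd_norm (Int.natCast_dvd.2 hc))

section

variable [NeZero n] [IsPrincipalIdealRing (EpsOrder n)]

lemma mk_dvd_or_mk_star_dvd (hp : p.Prime) {π : EpsOrder n} (hπ : (norm π).natAbs = p)
    {c : Associates (EpsOrder n)} (hc : p ∣ assocNorm n c) :
    Associates.mk π ∣ c ∨ Associates.mk (star π) ∣ c := by
  obtain ⟨α, rfl⟩ := Associates.mk_surjective c
  simp only [Associates.mk_dvd_mk]
  exact dvd_or_star_dvd (prime_of_natAbs_norm (hπ ▸ hp)) (Int.natAbs_dvd_natAbs.1 (hπ ▸ hc))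

lemma ncard_assocNorm_preimage_of_dvd (hp : p.Prime) (hnot : ¬IsInert p n) (hdvd : p ∣ n ^ 2 + 4)
    (M : ℕ) : (assocNorm n ⁻¹' {p * M}).ncard = (assocNorm n ⁻¹' {M}).ncard := by
  obtain ⟨π, hπ⟩ := exists_natAbs_norm_eq hp hnot
  have hstar : Associates.mk (star π) = Associates.mk π :=
    (Associates.mk_eq_mk_iff_associated.2 ((associated_star_iff hp hπ).2 hdvd)).symm
  refine ncard_preimage_of_ramified hp.ne_zero ((assocNorm_mk π).trans hπ) (fun c hc => ?_) M
  simpa [hstar] using mk_dvd_or_mk_star_dvd hp hπ hc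

lemma ncard_assocNorm_preimage_of_not_dvd (hp : p.Prime) (hnot : ¬IsInert p n)
    (hdvd : ¬p ∣ n ^ 2 + 4) {M : ℕ} (hM : M ≠ 0) :
    (assocNorm n ⁻¹' {p * M}).ncard + (if p ∣ M then (assocNorm n ⁻¹' {M / p}).ncard else 0) =
      2 * (assocNorm n ⁻¹' {M}).ncard := by
  obtain ⟨π, hπ⟩ := exists_natAbs_norm_eq hp hnot
  have hπ' : (norm (star π)).natAbs = p := by rwa [QuadraticAlgebra.norm_star]
  have hprime : Prime π := prime_of_natAbs_norm (hπ ▸ hp)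
  have hprime' : Prime (star π) := prime_of_natAbs_norm (hπ' ▸ hp)
  refine ncard_preimage_of_split hp.ne_zero ((assocNorm_mk π).trans hπ)
    ((assocNorm_mk (star π)).trans hπ') (fun c hc => mk_dvd_or_mk_star_dvd hp hπ hc) ?_
    (finite_assocNorm_preimage (mul_ne_zero hp.ne_zero hM))
  rintro _ ⟨c, rfl⟩ hc
  refine mul_dvd_mul_left _ (((Associates.prime_mk.2 hprime').dvd_or_dvd hc).resolve_left ?_)
  intro h
  exact hdvd ((associated_star_iff hp hπ).1
    (hprime'.associated_of_dvd hprime (Associates.mk_dvd_mk.1 h)).symm)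

theorem heckeRecursion_assocNorm (hn : Odd n) :
    HeckeRecursion (fun k => J(k | n ^ 2 + 4))
      (fun N => ((assocNorm n ⁻¹' {N}).ncard : ℤ)) := by
  intro p M hp hM
  have := Fact.mk hp
  dsimp only
  by_cases hinert : IsInert p n
  · rw [(jacobiSym_sq_add_four_eq_neg_one_iff hn hp).2 hinert, hinert.ncard_assocNorm_preimage]
    split_ifs <;> simp
  by_cases hdvd : p ∣ n ^ 2 + 4
  · rw [(jacobiSym_sq_add_four_eq_zero_iff hp).2 hdvd,
      ncard_assocNorm_preimage_of_dvd hp hinert hdvd]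
    simp
  · have hχ : J(p | n ^ 2 + 4) = 1 := by
      have hzero := mt (jacobiSym_sq_add_four_eq_zero_iff hp).1 hdvd
      have hneg := mt (jacobiSym_sq_add_four_eq_neg_one_iff hn hp).1 hinert
      have := jacobiSym.trichotomy p (n ^ 2 + 4)
      tauto
    have hcard := ncard_assocNorm_preimage_of_not_dvd hp hinert hdvd hM
    rw [hχ, one_mul, one_add_one_eq_two]
    exact_mod_cast hcard

theorem ncard_assocNorm_preimage (hn : Odd n) {N : ℕ} (hN : N ≠ 0) :
    ((assocNorm n ⁻¹' {N}).ncard : ℤ) = ∑ d ∈ N.divisors, J(d | n ^ 2 + 4) := by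
  have hmul (a b : ℕ) : J((a * b : ℕ) | n ^ 2 + 4) = J(a | n ^ 2 + 4) * J(b | n ^ 2 + 4) := by
    rw [Nat.cast_mul, jacobiSym.mul_left]
  have hone : assocNorm n ⁻¹' {1} = {1} := by
    ext c
    obtain ⟨α, rfl⟩ := Associates.mk_surjective c
    rw [Set.mem_preimage, Set.mem_singleton_iff, assocNorm_mk, ← isUnit_iff_natAbs_norm,
      Set.mem_singleton_iff, Associates.mk_eq_one]
  refine (heckeRecursion_assocNorm hn).eq (heckeRecursion_sum_divisors hmul) ?_ hN
  simp [hone]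

theorem countsConePoints_jacobiSym (hn : Odd n) :
    CountsConePoints n fun k => (J(k | n ^ 2 + 4) : ℝ) := by
  intro N hN
  have hcard := ncard_assocNorm_preimage hn hN
  rw [← (bijOn_mk_ofCone hN).image_eq, (bijOn_mk_ofCone hN).injOn.ncard_image] at hcard
  rw [Nat.card_coe_set_eq]
  dsimp only
  exact_mod_cast hcard

theorem mem_of_isPrincipalIdealRing_epsOrder : n ∈ [1, 2, 3, 5, 7, 13, 17] := by
  have hinert (p : ℕ) (hp : p.Prime) (hpn : p < n) : IsInert p n := isInert_of_lt hp hpn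
  suffices hle : n ≤ 37 by
    by_contra hmem
    obtain ⟨p, hp, hpn, hnot⟩ :=
      exists_prime_lt_not_isInert hle (by simpa [NeZero.ne n] using hmem)
    exact hnot (hinert p hp hpn)
  by_contra! hlarge
  have hodd : Odd n := by
    by_contra heven
    have hn2 : (n : ZMod 2) = 0 := by
      rwa [ZMod.natCast_eq_zero_iff_even, ← Nat.not_odd_iff_even]
    have h2 := hinert 2 Nat.prime_two (by lia)
    rw [hn2] at h2
    exact absurd h2 (by decide)
  refine hlarge.not_ge (le_of_countsConePoints rfl hinert (even_jacobiSym_cast hodd)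
    (fun k => ?_) ?_)
  · obtain h | h | h := jacobiSym.trichotomy k.cast (n ^ 2 + 4) <;> simp [h]
  · have hcast (k : ℕ) : J((k : ZMod (n ^ 2 + 4)).cast | n ^ 2 + 4) = J(k | n ^ 2 + 4) :=
      jacobiSym_congr (by simp)
    simpa only [hcast] using countsConePoints_jacobiSym hodd

end

end AssociateCount

section ClassNumber

section Embedding

variable {n : ℕ}

/-- The embedding of `ℤ[ε]` in the complex numbers. -/
def epsEmbedding (n : ℕ) : EpsOrder n →ₐ[ℤ] ℂ :=
  QuadraticAlgebra.lift ⟨fundUnit n, by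
    rw [← sq]
    simp only [one_smul, zsmul_eq_mul, Int.cast_natCast]
    exact_mod_cast (fundUnit_sq n).trans (add_comm _ _)⟩

lemma epsEmbedding_apply (α : EpsOrder n) : epsEmbedding n α = α.re + α.im * fundUnit n := by
  simp [epsEmbedding]

lemma epsEmbedding_injective [NeZero n] : Function.Injective (epsEmbedding n) := by
  rw [injective_iff_map_eq_zero]
  intro α hα
  by_contra hne
  have hnorm : epsEmbedding n (QuadraticAlgebra.norm α : ℤ) = 0 := by
    rw [intCast_norm, map_mul, hα, zero_mul]
  rw [map_intCast, Int.cast_eq_zero] at hnorm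
  exact norm_ne_zero hne hnorm

lemma omegaD_sq_add_four (n : ℕ) :
    omegaD ((n : ℤ) ^ 2 + 4) = fundUnit n + (((n : ℤ) ^ 2 + 4 - n) / 2 : ℤ) := by
  have heven : (2 : ℤ) ∣ (n : ℤ) ^ 2 + 4 - n := by
    obtain ⟨k, hk⟩ := Int.even_mul_pred_self n
    exact ⟨k + 2, by linear_combination hk⟩
  rw [Int.cast_div heven two_ne_zero, omegaD, sqrtD, if_pos (by positivity), fundUnit]
  push_cast
  ring

lemma range_epsEmbedding : (epsEmbedding n).toRingHom.range = QOrder ((n : ℤ) ^ 2 + 4) := by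
  have hω := omegaD_sq_add_four n
  refine le_antisymm ?_ ((Subring.closure_le).2 (Set.singleton_subset_iff.2 ?_))
  · rintro _ ⟨α, rfl⟩
    have hε : (fundUnit n : ℂ) ∈ QOrder ((n : ℤ) ^ 2 + 4) := by
      rw [eq_sub_of_add_eq hω.symm]
      exact Subring.sub_mem _ (Subring.subset_closure rfl) (intCast_mem _ _)
    change epsEmbedding n α ∈ _
    rw [epsEmbedding_apply]
    exact Subring.add_mem _ (intCast_mem _ _) (Subring.mul_mem _ (intCast_mem _ _) hε)
  · refine ⟨⟨((n : ℤ) ^ 2 + 4 - n) / 2, 1⟩, ?_⟩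
    change epsEmbedding n _ = _
    rw [epsEmbedding_apply, hω, Int.cast_one, one_mul, add_comm]

/-- The order `ℤ[ε]` is the quadratic order of discriminant `n ^ 2 + 4`. -/
def epsOrderEquiv (n : ℕ) [NeZero n] : EpsOrder n ≃+* QOrder ((n : ℤ) ^ 2 + 4) :=
  (RingEquiv.ofBijective (epsEmbedding n).toRingHom.rangeRestrict
    ⟨fun _ _ h => epsEmbedding_injective (congrArg Subtype.val h),
      RingHom.rangeRestrict_surjective _⟩).trans (RingEquiv.subringCongr range_epsEmbedding)

end Embedding

section MaximalOrder

variable {d : ℤ}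

lemma QOrder.mem_closure (a : QOrder d) : (a : ℂ) ∈ Subfield.closure {omegaD d} := by
  have hle : QOrder d ≤ (Subfield.closure {omegaD d}).toSubring :=
    Subring.closure_le.2 Subfield.subset_closure
  exact hle a.2

theorem IsMaximalOrder.isIntegrallyClosed [Algebra.IsIntegral ℤ (QOrder d)]
    (hmax : IsMaximalOrder d) : IsIntegrallyClosed (QOrder d) := by
  rw [isIntegrallyClosed_iff (FractionRing (QOrder d))]
  intro x hx
  let ψ : FractionRing (QOrder d) →ₐ[QOrder d] ℂ :=
    IsFractionRing.liftAlgHom (g := Algebra.ofId (QOrder d) ℂ) Subtype.val_injective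
  have hintegral : IsIntegral ℤ (ψ x) := isIntegral_trans _ (hx.map ψ)
  have hmem : ψ x ∈ Subfield.closure {omegaD d} := by
    obtain ⟨a, b, -, rfl⟩ := IsFractionRing.div_surjective (A := QOrder d) x
    rw [map_div₀, AlgHom.commutes, AlgHom.commutes]
    exact Subfield.div_mem _ (QOrder.mem_closure a) (QOrder.mem_closure b)
  refine ⟨⟨ψ x, hmax _ hmem hintegral⟩, ψ.toRingHom.injective ?_⟩
  exact ψ.commutes _

theorem IsMaximalOrder.isDedekindDomain [Module.Finite ℤ (QOrder d)] (hmax : IsMaximalOrder d) :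
    IsDedekindDomain (QOrder d) := by
  have : IsNoetherianRing (QOrder d) := .of_finite ℤ _
  have : Ring.DimensionLEOne (QOrder d) := .of_isIntegral ℤ _
  have := hmax.isIntegrallyClosed
  exact { toIsDomain := inferInstance, toIsDedekindRing := { } }

theorem classNumber_eq_one_iff [IsDedekindDomain (QOrder d)] :
    classNumber d = 1 ↔ IsPrincipalIdealRing (QOrder d) := by
  constructor
  · intro h
    rw [classNumber] at h
    have := Nat.finite_of_card_ne_zero (h.trans_ne one_ne_zero)
    have := Fintype.ofFinite (ClassGroup (QOrder d))
    rw [Nat.card_eq_fintype_card] at h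
    exact card_classGroup_eq_one_iff.1 h
  · intro h
    rw [classNumber, Nat.card_eq_fintype_card, card_classGroup_eq_one]

end MaximalOrder

theorem classNumber_sq_add_four_eq_one_iff {n : ℕ} [NeZero n]
    (hmax : IsMaximalOrder ((n : ℤ) ^ 2 + 4)) :
    classNumber ((n : ℤ) ^ 2 + 4) = 1 ↔ IsPrincipalIdealRing (EpsOrder n) := by
  let e := epsOrderEquiv n
  have : Module.Finite ℤ (QOrder ((n : ℤ) ^ 2 + 4)) := .equiv e.toAddEquiv.toIntLinearEquiv
  have := hmax.isDedekindDomain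
  rw [classNumber_eq_one_iff]
  exact ⟨fun _ => .of_surjective e.symm e.symm.surjective, fun _ => .of_surjective e e.surjective⟩

end ClassNumber

section Converse

open QuadraticAlgebra (norm)

-- The Dedekind–Hasse criterion.
theorem isPrincipalIdealRing_of_exists_lt {R : Type*} [CommRing R] (ν : R → ℕ)
    (h : ∀ α ≠ 0, ∀ β, ¬α ∣ β → ∃ κ l : R, κ * β - l * α ≠ 0 ∧ ν (κ * β - l * α) < ν α) :
    IsPrincipalIdealRing R := by
  refine ⟨fun I => ?_⟩
  obtain rfl | hI := eq_or_ne I ⊥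
  · exact bot_isPrincipal
  let S : Set R := {α | α ∈ I ∧ α ≠ 0}
  have hS : S.Nonempty := Submodule.exists_mem_ne_zero_of_ne_bot hI
  obtain ⟨α, ⟨hα, hα0⟩, hmin⟩ := (measure ν).wf.has_min S hS
  refine ⟨α, le_antisymm (fun β hβ => ?_) ((Ideal.span_singleton_le_iff_mem I).2 hα)⟩
  rw [Ideal.submodule_span_eq, Ideal.mem_span_singleton]
  by_contra hnot
  obtain ⟨κ, l, hne, hlt⟩ := h α hα0 β hnot
  exact hmin _ ⟨I.sub_mem (I.mul_mem_left κ hβ) (I.mul_mem_left l hα), hne⟩ hlt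

variable {n B : ℕ} {m : ℤ} {θ : EpsOrder n}

lemma abs_sub_mul_le {x y c : ℝ} (hy : y ≠ 0) {j : ℤ} (h : |x / y - j| ≤ c) :
    |x - j * y| ≤ c * |y| := by
  have : x - j * y = (x / y - j) * y := by field_simp
  rw [this, abs_mul]
  gcongr

lemma abs_normForm_lt_sq {ν c x y m : ℝ} (hc : 0 < c) (hν : ν ^ 2 + 4 < 4 * c ^ 2) (hm : m ≠ 0)
    (hx : |2 * x + ν * y| ≤ |m|) (hy : |y| ≤ 1 / c * |m|) : |normForm ν x y| < m ^ 2 := by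
  have hfour := four_mul_normForm ν x y
  have hsq : (2 * x + ν * y) ^ 2 ≤ m ^ 2 := sq_le_sq.2 hx
  have hdisc : (ν ^ 2 + 4) * y ^ 2 < 4 * m ^ 2 :=
    calc (ν ^ 2 + 4) * y ^ 2
        ≤ (ν ^ 2 + 4) * (1 / c * |m|) ^ 2 := by
          rw [← sq_abs y]
          gcongr
      _ < 4 * c ^ 2 * (1 / c * |m|) ^ 2 := by gcongr
      _ = 4 * m ^ 2 := by
          rw [mul_pow, sq_abs]
          field_simp
  have hnonneg : 0 ≤ (ν ^ 2 + 4) * y ^ 2 := by positivity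
  rw [abs_lt]
  constructor <;> nlinarith [sq_nonneg (2 * x + ν * y)]

-- Dirichlet approximation of `θ.im / m`, then rounding: both terms of
-- `4 N(a + b ε) = (2 a + n b) ^ 2 - (n ^ 2 + 4) b ^ 2` become small.
lemma exists_abs_norm_natCast_mul_sub_lt (hB : n ^ 2 + 4 < 4 * (B + 1) ^ 2) (hm : m ≠ 0)
    (θ : EpsOrder n) :
    ∃ k : ℕ, k ≠ 0 ∧ k ≤ B ∧ ∃ l : EpsOrder n, |norm (k * θ - l * m : EpsOrder n)| < m ^ 2 := by
  have hm' : (m : ℝ) ≠ 0 := mod_cast hm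
  have hB0 : 0 < B := by
    by_contra! h
    obtain rfl : B = 0 := by lia
    lia
  obtain ⟨j, k, hk0, hkB, hjk⟩ := Real.exists_int_int_abs_mul_sub_le ((θ.im : ℝ) / m) hB0
  lift k to ℕ using hk0.le
  set b : ℤ := k * θ.im - j * m with hb
  let i := round (((2 * (k * θ.re) + n * b : ℤ) : ℝ) / (2 * m))
  set a : ℤ := k * θ.re - i * m with ha
  have hbm : |(b : ℝ)| ≤ 1 / (B + 1) * |(m : ℝ)| := by
    rw [Int.cast_natCast, ← mul_div_assoc] at hjk
    have := abs_sub_mul_le hm' hjk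
    rw [hb]
    exact_mod_cast this
  have ham : |2 * (a : ℝ) + n * b| ≤ |(m : ℝ)| := by
    have := abs_sub_mul_le (mul_ne_zero two_ne_zero hm') (abs_sub_round
      (((2 * (k * θ.re) + n * b : ℤ) : ℝ) / (2 * m)))
    calc |2 * (a : ℝ) + n * b|
        = |((2 * (k * θ.re) + n * b : ℤ) : ℝ) - i * (2 * m)| := by
          rw [ha]
          push_cast
          ring_nf
      _ ≤ 1 / 2 * |2 * (m : ℝ)| := this
      _ = |(m : ℝ)| := by rw [abs_mul, abs_two, one_div, inv_mul_cancel_left₀ two_ne_zero]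
  have hel : (k : EpsOrder n) * θ - ⟨i, j⟩ * (m : EpsOrder n) = ⟨a, b⟩ := by
    ext <;> simp [ha, hb]
  refine ⟨k, by lia, by lia, ⟨i, j⟩, ?_⟩
  rw [hel, norm_eq_normForm]
  have hlt : |normForm (n : ℝ) a b| < (m : ℝ) ^ 2 :=
    abs_normForm_lt_sq (by positivity) (mod_cast hB) hm' ham hbm
  unfold normForm at hlt ⊢
  exact_mod_cast hlt

variable [NeZero n]

lemma IsInert.exists_abs_norm_lt {p : ℕ} [Fact p.Prime] (h : IsInert p n) (hm : m ≠ 0)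
    (hθ : ¬(m : EpsOrder n) ∣ θ) (hpθ : (m : EpsOrder n) ∣ p * θ) :
    ∃ κ l : EpsOrder n, κ * θ - l * m ≠ 0 ∧ |norm (κ * θ - l * m : EpsOrder n)| < m ^ 2 := by
  obtain ⟨γ, hγ⟩ := hpθ
  have hp : (0 : ℤ) < p := mod_cast NeZero.pos p
  have hndvd : ¬(p : ℤ) ∣ norm γ := by
    intro hdvd
    obtain ⟨δ, rfl⟩ := h.intCast_dvd_of_dvd_norm hdvd
    refine hθ ⟨δ, mul_left_cancel₀ (Nat.cast_ne_zero.2 (NeZero.ne p) : (p : EpsOrder n) ≠ 0) ?_⟩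
    rw [hγ, Int.cast_natCast, mul_left_comm]
  set K := norm γ
  refine ⟨star γ, ((K / p : ℤ) : EpsOrder n), ?_⟩
  set δ : EpsOrder n := star γ * θ - ((K / p : ℤ) : EpsOrder n) * m
  have hδ : ((p : ℤ) : EpsOrder n) * δ = ((m * (K % p) : ℤ) : EpsOrder n) := by
    have hKγ : (K : EpsOrder n) = γ * star γ := intCast_norm γ
    have hdiv : (K : EpsOrder n) = ((K % p + p * (K / p) : ℤ) : EpsOrder n) := by
      rw [Int.emod_add_mul_ediv]
    push_cast at hdiv ⊢
    linear_combination star γ * hγ - m * hKγ + m * hdiv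
  have hnorm : (p : ℤ) ^ 2 * norm δ = (m * (K % p)) ^ 2 := by
    simpa only [map_mul, QuadraticAlgebra.norm_intCast, Int.cast_id] using
      congrArg QuadraticAlgebra.norm hδ
  have hrem : 0 < K % p :=
    (Int.emod_nonneg K hp.ne').lt_of_ne' fun hzero => hndvd (Int.dvd_of_emod_eq_zero hzero)
  have hpos : 0 < norm δ := by
    refine pos_of_mul_pos_right (a := (p : ℤ) ^ 2) ?_ (by positivity)
    rw [hnorm]
    positivity
  refine ⟨fun hzero => hpos.ne' (by rw [hzero, QuadraticAlgebra.norm_zero]), ?_⟩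
  rw [abs_of_pos hpos]
  refine lt_of_mul_lt_mul_left (a := (p : ℤ) ^ 2) ?_ (by positivity)
  rw [hnorm, mul_pow, mul_comm]
  gcongr
  exact Int.emod_lt_of_pos K hp

lemma exists_abs_norm_lt_of_dvd_mul (hm : m ≠ 0) (hθ : ¬(m : EpsOrder n) ∣ θ) {k : ℕ}
    (hk : k ≠ 0) (hinert : ∀ p ∈ k.primeFactors, IsInert p n) (hkθ : (m : EpsOrder n) ∣ k * θ) :
    ∃ κ l : EpsOrder n, κ * θ - l * m ≠ 0 ∧ |norm (κ * θ - l * m : EpsOrder n)| < m ^ 2 := by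
  induction k using induction_on_primes generalizing θ with
  | zero => exact absurd rfl hk
  | one => exact absurd (by simpa using hkθ) hθ
  | prime_mul p a hp ih =>
    have := Fact.mk hp
    rw [Nat.primeFactors_mul hp.ne_zero (right_ne_zero_of_mul hk)] at hinert
    by_cases haθ : (m : EpsOrder n) ∣ a * θ
    · exact ih hθ (right_ne_zero_of_mul hk) (fun q hq => hinert q (by simp [hq])) haθ
    · obtain ⟨κ, l, h⟩ := (hinert p (by simp [hp])).exists_abs_norm_lt hm haθ
        (by rwa [← mul_assoc, ← Nat.cast_mul])
      exact ⟨κ * a, l, by rwa [mul_assoc]⟩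

theorem isPrincipalIdealRing_epsOrder_of_isInert (hB : n ^ 2 + 4 < 4 * (B + 1) ^ 2)
    (hinert : ∀ p, p.Prime → p ≤ B → IsInert p n) : IsPrincipalIdealRing (EpsOrder n) := by
  refine isPrincipalIdealRing_of_exists_lt (fun α => (norm α).natAbs) fun α hα β hnot => ?_
  have hnorm := norm_ne_zero hα
  have hmul (κ l : EpsOrder n) :
      κ * (β * star α) - l * (norm α : ℤ) = (κ * β - l * α) * star α := by
    rw [intCast_norm]
    ring
  suffices ∃ κ l : EpsOrder n, κ * (β * star α) - l * (norm α : ℤ) ≠ 0 ∧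
      |norm (κ * (β * star α) - l * (norm α : ℤ) : EpsOrder n)| < norm α ^ 2 by
    obtain ⟨κ, l, hne, hlt⟩ := this
    rw [hmul] at hne hlt
    refine ⟨κ, l, left_ne_zero_of_mul hne, ?_⟩
    rw [map_mul, QuadraticAlgebra.norm_star, abs_mul, ← sq_abs, sq] at hlt
    simpa only [← Int.natCast_natAbs, Nat.cast_lt] using
      lt_of_mul_lt_mul_right hlt (abs_nonneg _)
  have hθ : ¬((norm α : ℤ) : EpsOrder n) ∣ β * star α := by
    rw [intCast_norm, mul_dvd_mul_iff_right (star_ne_zero.2 hα)]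
    exact hnot
  obtain ⟨k, hk, hkB, l, hlt⟩ := exists_abs_norm_natCast_mul_sub_lt hB hnorm (β * star α)
  by_cases hzero : k * (β * star α) - l * (norm α : ℤ) = 0
  · refine exists_abs_norm_lt_of_dvd_mul hnorm hθ hk (fun p hp => ?_)
      ⟨l, by rw [sub_eq_zero.1 hzero, mul_comm]⟩
    have hp' := Nat.mem_primeFactors.1 hp
    exact hinert p hp'.1 ((Nat.le_of_dvd (Nat.pos_of_ne_zero hk) hp'.2.1).trans hkB)
  · exact ⟨k, l, hzero, hlt⟩

theorem isPrincipalIdealRing_epsOrder_of_mem (h : n ∈ [1, 2, 3, 5, 7, 13, 17]) :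
    IsPrincipalIdealRing (EpsOrder n) := by
  refine isPrincipalIdealRing_epsOrder_of_isInert (B := (n + 1) / 2) ?_ fun p hp hpn => ?_
  · have : n + 2 ≤ 2 * ((n + 1) / 2 + 1) := by lia
    nlinarith [NeZero.pos n]
  · fin_cases h <;> interval_cases p <;> first | decide | exact absurd hp (by decide)

end Converse

/-- For `n ≥ 1` with `O_{n²+4}` a maximal order, the class number `h_{n²+4}` is `1`
iff `n ∈ {1, 2, 3, 5, 7, 13, 17}`. -/
theorem maximal_add_classNumber_one_iff (n : ℤ) (hn : 1 ≤ n)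
    (hmax : IsMaximalOrder (n ^ 2 + 4)) :
    classNumber (n ^ 2 + 4) = 1 ↔ n ∈ ({1, 2, 3, 5, 7, 13, 17} : Set ℤ) := by
  lift n to ℕ using by lia
  have : NeZero n := ⟨by lia⟩
  have hmem : (n : ℤ) ∈ ({1, 2, 3, 5, 7, 13, 17} : Set ℤ) ↔ n ∈ [1, 2, 3, 5, 7, 13, 17] := by
    simp only [Set.mem_insert_iff, Set.mem_singleton_iff, List.mem_cons, List.not_mem_nil]
    lia
  rw [classNumber_sq_add_four_eq_one_iff hmax, hmem]
  exact ⟨fun _ => mem_of_isPrincipalIdealRing_epsOrder, isPrincipalIdealRing_epsOrder_of_mem⟩
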